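/- arXiv:2401.06685 — 2 statements merged into one kernel-verified Lean document; each statement's English description precedes it below -/
import Mathlib

section
/- For every integer Δ ≥ 1 there exists C = C(Δ) > 0 with the following property: for every graph G of maximum degree at most Δ, every integer k ≥ 1, and all S,T ⊆ V(G), either there are k paths between S and T pairwise at distance at least two (i.e., pairwise anticomplete: vertex-disjoint with no edges between them), or there is a set X ⊆ V(G) with |X| ≤ kC such that every path between S and T contains a vertex of X. -/
/-- The distance in `G` between vertex sets `A` and `B` is at least `d`:
every walk from `A` to `B` has length at least `d`. -/
def SetDistGE {V : Type} (G : SimpleGraph V) (A B : Set V) (d : ℕ) : Prop :=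
  ∀ ⦃x y : V⦄, x ∈ A → y ∈ B → ∀ w : G.Walk x y, d ≤ w.length

/-- The distance in `G` between `x` and `y` is at most `ℓ`. -/
def DistLE {V : Type} (G : SimpleGraph V) (x y : V) (ℓ : ℕ) : Prop :=
  ∃ w : G.Walk x y, w.length ≤ ℓ

/-- `P` is the vertex set of a path of `G` with one end in `S` and one end in `T`. -/
def IsSTPath {V : Type} (G : SimpleGraph V) (S T : Set V) (P : Set V) : Prop :=
  ∃ (u v : V) (w : G.Walk u v), w.IsPath ∧ u ∈ S ∧ v ∈ T ∧ P = {x | x ∈ w.support}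

/-- There are `k` paths between `S` and `T`, pairwise at distance at least `d`. -/
def HasKPaths {V : Type} (G : SimpleGraph V) (S T : Set V) (k d : ℕ) : Prop :=
  ∃ P : Fin k → Set V, (∀ i, IsSTPath G S T (P i)) ∧
    ∀ i j, i ≠ j → SetDistGE G (P i) (P j) d

/-- There is a set `X` of at most `m` vertices such that every path between `S` and `T`
contains a vertex with distance at most `ℓ` from some member of `X`. -/
def CoarseSeparator {V : Type} (G : SimpleGraph V) (S T : Set V) (m ℓ : ℕ) : Prop :=
  ∃ X : Finset V, X.card ≤ m ∧
    ∀ (u v : V) (w : G.Walk u v), w.IsPath → u ∈ S → v ∈ T →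
      ∃ y ∈ w.support, ∃ x ∈ X, DistLE G x y ℓ


/-- There is a walk from `S` to `T` inside `A`. -/
def Lk {V : Type} (G : SimpleGraph V) (A S T : Set V) : Prop :=
  ∃ u ∈ S, ∃ v ∈ T, ∃ w : G.Walk u v, ∀ z ∈ w.support, z ∈ A

theorem Lk.symm {V : Type} {G : SimpleGraph V} {A S T : Set V} (h : Lk G A S T) :
    Lk G A T S := by
  obtain ⟨u, hu, v, hv, w, hw⟩ := h
  exact ⟨v, hv, u, hu, w.reverse, by simpa using hw⟩

theorem Lk.mono {V : Type} {G : SimpleGraph V} {A B S T S' T' : Set V} (h : Lk G A S T)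
    (hA : A ⊆ B) (hS : S ⊆ S') (hT : T ⊆ T') : Lk G B S' T' := by
  obtain ⟨u, hu, v, hv, w, hw⟩ := h
  exact ⟨u, hS hu, v, hT hv, w, fun z hz => hA (hw z hz)⟩

theorem Lk.monoG {V : Type} {G H : SimpleGraph V} {A S T : Set V} (h : Lk G A S T)
    (hG : G ≤ H) : Lk H A S T := by
  obtain ⟨u, hu, v, hv, w, hw⟩ := h
  exact ⟨u, hu, v, hv, w.mapLe hG, by simpa using hw⟩

theorem Lk.trans {V : Type} {G : SimpleGraph V} {A S T : Set V} {z : V} (h : Lk G A S {z})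
    (h' : Lk G A {z} T) : Lk G A S T := by
  obtain ⟨u, hu, v, rfl, w, hw⟩ := h
  obtain ⟨u', rfl, v', hv', w', hw'⟩ := h'
  refine ⟨u, hu, v', hv', w.append w', fun z hz => ?_⟩
  rw [SimpleGraph.Walk.mem_support_append_iff] at hz
  exact hz.elim (hw z) (hw' z)

theorem Lk.adj {V : Type} {G : SimpleGraph V} {A : Set V} {y z : V} 
    (hy : y ∈ A) (hz : z ∈ A) (hyz : G.Adj y z) : Lk G A {y} {z} := 
  ⟨y, rfl, z, rfl, hyz.toWalk, by simp [hy, hz]⟩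

theorem Lk.refl {V : Type} {G : SimpleGraph V} {A : Set V} {z : V} 
     (hz : z ∈ A) : Lk G A {z} {z} := 
  ⟨z, rfl, z, rfl, .nil, by simp [hz]⟩

theorem Lk.mem_right {V : Type} {G : SimpleGraph V} {A S : Set V} {z : V} 
     (h : Lk G A S {z}) : z ∈ A := by
  obtain ⟨u, hu, v, rfl, w, hw⟩ := h
  exact hw _ (by simp)

/-- a walk in `A` from the reachable set to outside crosses an edge absent in the smaller graph -/
theorem crossing {V : Type} {G G' : SimpleGraph V} {A S : Set V} {u v : V} (w : G.Walk u v)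
    (hw : ∀ z ∈ w.support, z ∈ A) (hu : Lk G' A S {u}) (hv : ¬ Lk G' A S {v}) :
    ∃ p q, G.Adj p q ∧ ¬ G'.Adj p q ∧ Lk G' A S {p} ∧ ¬ Lk G' A S {q} ∧ q ∈ w.support := by
  obtain ⟨d, hd, h1, h2⟩ := w.exists_boundary_dart {z | Lk G' A S {z}} hu hv
  refine ⟨d.fst, d.snd, d.adj, fun h => h2 ?_, h1, h2, w.dart_snd_mem_support_of_mem_darts hd⟩
  exact Lk.trans (z := d.fst) h1 (Lk.adj (Lk.mem_right h1)
    (hw _ (w.dart_snd_mem_support_of_mem_darts hd)) h)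

theorem del_adj {V : Type} {G : SimpleGraph V} {x y p q : V} (h : G.Adj p q)
    (h' : ¬ (G.deleteEdges {s(x,y)}).Adj p q) : (p = x ∧ q = y) ∨ (p = y ∧ q = x) := by
  have h2 : (p = x → ¬q = y) → p = y ∧ q = x := by
    simpa [SimpleGraph.deleteEdges_adj, h] using h'
  tauto

theorem menger_half {V : Type} [DecidableEq V] {G : SimpleGraph V} {S T : Set V} {x y : V} {X : Finset V} {k : ℕ}
    (hyp : ∀ X : Finset V, X.card < k → Lk G (↑X)ᶜ S T)
    (hX : ¬ Lk (G.deleteEdges {s(x,y)}) (↑X)ᶜ S T)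
    (hy : ¬ Lk (G.deleteEdges {s(x,y)}) (↑X)ᶜ S {y}) 
    (Y : Finset V) (hY : Y.card < k) : 
    Lk (G.deleteEdges {s(x,y)}) (↑Y)ᶜ S ↑(insert x X) := by
  by_contra hcon
  have key : ∀ z, Lk (G.deleteEdges {s(x,y)}) (↑Y)ᶜ S {z} → Lk (G.deleteEdges {s(x,y)}) (↑X)ᶜ S {z} := by
    rintro z ⟨u, hu, v, rfl, w, hw⟩
    refine ⟨u, hu, v, rfl, w, fun a ha haX => hcon ?_⟩
    refine ⟨u, hu, a, ?_, w.takeUntil a ha, fun b hb => hw b (w.support_takeUntil_subset_support ha hb)⟩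
    simp at haX
    simp [haX]
  obtain ⟨u, hu, v, hv, w, hw⟩ := hyp Y hY
  obtain ⟨p, q, h1, h2, h3, h4, -⟩ := crossing (G' := G.deleteEdges {s(x,y)}) (S := S) w hw
    ((Lk.refl (hw u (by simp))).mono subset_rfl (by simpa using hu) subset_rfl)
    (fun h => hX ((key v h).mono subset_rfl subset_rfl (by simpa using hv)))
  rcases del_adj h1 h2 with ⟨rfl, rfl⟩ | ⟨rfl, rfl⟩
  · exact hcon (h3.mono subset_rfl subset_rfl (by simp))
  · exact hy (key _ h3)

/-- the `S`-side linkage in the induction step -/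
theorem menger_paths {V : Type} [DecidableEq V] {G : SimpleGraph V} {S : Set V} {x : V}
    {X : Finset V} {k : ℕ} (hXk : X.card < k) (hx : Lk G (↑X)ᶜ S {x})
    (A : Fin k → Set V) (hA : ∀ i j, i ≠ j → Disjoint (A i) (A j))
    (hL : ∀ i, Lk G (A i) S ↑(insert x X)) :
    ∃ (a : Fin k → V) (P : Fin k → Set V), Function.Injective a ∧
      (∀ z, z ∈ insert x X ↔ ∃ i, a i = z) ∧ (∀ i j, i ≠ j → Disjoint (P i) (P j)) ∧
      (∀ i, Lk G (P i) S {a i}) ∧ 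
      ∀ i, ∀ z ∈ P i, Lk G (↑X)ᶜ S {z} ∨ (z = a i ∧ z ∈ X) := by
  choose s hs a ha w hw using hL
  have haA : ∀ i, a i ∈ A i := fun i => hw i _ (by simp)
  have uniq : ∀ i j z, z ∈ A i → z ∈ A j → i = j := by
    intro i j z hi hj
    by_contra h
    exact Set.disjoint_left.1 (hA i j h) hi hj
  have inj : Function.Injective a := fun i j h => uniq i j (a i) (haA i) (h ▸ haA j)
  have himg : Finset.univ.image a = insert x X := by
    apply Finset.eq_of_subset_of_card_le
    · intro z hz
      simp only [Finset.mem_image, Finset.mem_univ, true_and] at hz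
      obtain ⟨i, rfl⟩ := hz
      exact ha i
    · rw [Finset.card_image_of_injective _ inj]
      simp only [Finset.card_univ, Fintype.card_fin]
      exact (Finset.card_insert_le _ _).trans hXk
  have himg' : ∀ z, z ∈ insert x X ↔ ∃ i, a i = z := by
    intro z; rw [← himg]; simp
  refine ⟨a, fun i => {z | z ∈ (w i).bypass.support}, inj, himg', ?_, ?_, ?_⟩
  · intro i j hij
    refine (hA i j hij).mono ?_ ?_ <;> intro z hz <;>
      exact hw _ _ ((w _).support_bypass_subset_support hz)
  · intro i
    exact ⟨s i, hs i, a i, rfl, (w i).bypass, fun z hz => hz⟩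
  · intro i z hz
    by_cases hza : z = a i
    · subst hza
      have := ha i
      simp only [Finset.coe_insert, Set.mem_insert_iff, Finset.mem_coe] at this
      rcases this with h | h
      · left; rw [h]; exact hx
      · exact Or.inr ⟨rfl, h⟩
    · left
      refine ⟨s i, hs i, z, rfl, (w i).bypass.takeUntil z hz, fun b hb hbX => ?_⟩
      obtain ⟨j, rfl⟩ := (himg' b).1 (Finset.mem_insert_of_mem hbX)
      have h1 := hw i _ ((w i).support_bypass_subset_support 
        ((w i).bypass.support_takeUntil_subset_support hz hb))
      obtain rfl := uniq i j _ h1 (haA j)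
      exact SimpleGraph.Walk.endpoint_notMem_support_takeUntil (w i).bypass_isPath hz 
        (Ne.symm hza) hb

theorem menger {V : Type} (n : ℕ) : ∀ (G : SimpleGraph V) (_ : G.edgeSet.Finite) 
    (_ : G.edgeSet.ncard = n) (S T : Set V) (k : ℕ) 
    (_ : ∀ X : Finset V, X.card < k → Lk G (↑X)ᶜ S T), 
    ∃ A : Fin k → Set V, (∀ i j, i ≠ j → Disjoint (A i) (A j)) ∧ ∀ i, Lk G (A i) S T := by
  classical
  induction n with
  | zero =>
    intro G hfin hcard S T k hyp
    have hG : ∀ u v, ¬ G.Adj u v := by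
      intro u v h
      rw [Set.ncard_eq_zero hfin] at hcard
      have : s(u,v) ∈ G.edgeSet := h
      rw [hcard] at this
      exact this
    have : ∃ Y : Finset V, ↑Y ⊆ S ∩ T ∧ Y.card = k := by
      by_cases hf : (S ∩ T).Finite
      · have : k ≤ hf.toFinset.card := by
          by_contra hlt
          obtain ⟨u, hu, v, hv, w, hw⟩ := hyp hf.toFinset (by omega)
          cases w with
          | nil => exact hw u (by simp) (by simp [hu, hv])
          | cons h _ => exact hG _ _ h
        obtain ⟨Y, h1, h2⟩ := Finset.exists_subset_card_eq this
        exact ⟨Y, fun z hz => by simpa using h1 hz, h2⟩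
      · exact Set.Infinite.exists_subset_card_eq hf k
    obtain ⟨Y, hY, rfl⟩ := this
    refine ⟨fun i => {(Y.equivFin.symm i : V)}, fun i j hij => ?_, fun i => ?_⟩
    · simp only [Set.disjoint_singleton]
      intro h
      exact hij (Y.equivFin.symm.injective (Subtype.ext h))
    · have := hY (Y.equivFin.symm i).2
      exact (Lk.refl (Set.mem_singleton _)).mono subset_rfl (by simpa using this.1) (by simpa using this.2)
  | succ n ih =>
    intro G hfin hcard S T k hyp
    have hne : G.edgeSet.Nonempty := by
      rw [← Set.ncard_pos hfin]; omega
    obtain ⟨e, he⟩ := hne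
    have hfin' : (G.deleteEdges {e}).edgeSet.Finite := 
      hfin.subset (SimpleGraph.edgeSet_mono (SimpleGraph.deleteEdges_le _))
    have hcard' : (G.deleteEdges {e}).edgeSet.ncard = n := by
      rw [SimpleGraph.edgeSet_deleteEdges, Set.ncard_sdiff_singleton_of_mem he, hcard]; rfl
    have hle : G.deleteEdges {e} ≤ G := SimpleGraph.deleteEdges_le _
    have IH := ih _ hfin' hcard'
    by_cases hcase : ∀ X : Finset V, X.card < k → Lk (G.deleteEdges {e}) (↑X)ᶜ S T
    · obtain ⟨A, h1, h2⟩ := IH S T k hcase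
      exact ⟨A, h1, fun i => (h2 i).monoG hle⟩
    push Not at hcase
    obtain ⟨X, hXk, hX⟩ := hcase
    obtain ⟨u, hu, v, hv, w, hw⟩ := hyp X hXk
    obtain ⟨x, y, h1, h2, h3, h4, hyw⟩ := crossing (G' := G.deleteEdges {e}) (S := S) w hw
      ((Lk.refl (hw u (by simp))).mono subset_rfl (by simpa using hu) subset_rfl)
      (fun h => hX (h.mono subset_rfl subset_rfl (by simpa using hv)))
    have hexy : e = s(x,y) := by
      by_contra hne
      exact h2 (by simpa [SimpleGraph.deleteEdges_adj, h1] using Ne.symm hne)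
    subst hexy
    have hxR : ¬ Lk (G.deleteEdges {s(x,y)}) (↑X)ᶜ T {x} := fun h => hX (h3.trans h.symm)
    have hyR : Lk (G.deleteEdges {s(x,y)}) (↑X)ᶜ T {y} := by
      obtain ⟨p, q, g1, g2, g3, g4, -⟩ := crossing (G' := G.deleteEdges {s(x,y)}) (S := T) 
        w.reverse (by simpa using hw)
        ((Lk.refl (hw v (by simp))).mono subset_rfl (by simpa using hv) subset_rfl)
        (fun h => hX (h.symm.mono subset_rfl (by simpa using hu) subset_rfl))
      rcases del_adj g1 g2 with ⟨rfl, rfl⟩ | ⟨rfl, rfl⟩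
      · exact absurd g3 hxR
      · exact g3
    have hyX : y ∉ X := hw y hyw
    obtain ⟨A, hA, hAL⟩ := IH S ↑(insert x X) k (menger_half hyp hX h4)
    have hsw : G.deleteEdges {s(x,y)} = G.deleteEdges {s(y,x)} := by rw [Sym2.eq_swap]
    obtain ⟨B, hB, hBL⟩ := IH T ↑(insert y X) k (by
      rw [hsw]
      refine menger_half (fun X hX => (hyp X hX).symm) ?_ ?_
      · rw [← hsw]; exact fun h => hX h.symm
      · rw [← hsw]; exact hxR)
    obtain ⟨a, P, ainj, aim, Pd, PL, Pz⟩ := menger_paths hXk h3 A hA hAL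
    obtain ⟨b, Q, binj, bim, Qd, QL, Qz⟩ := menger_paths hXk hyR B hB hBL
    have hσ : ∀ i, ∃ j, b j = if a i = x then y else a i := by
      intro i
      rw [← bim]
      split_ifs with h
      · simp
      · have := (aim (a i)).2 ⟨i, rfl⟩
        simp only [Finset.mem_insert, h, false_or] at this
        simp [this]
    choose σ hσ using hσ
    have aX : ∀ i, a i = x ∨ a i ∈ X := by
      intro i
      have := (aim (a i)).2 ⟨i, rfl⟩
      simpa using this
    have σinj : ∀ i j, σ i = σ j → i = j := by
      intro i j hij
      apply ainj
      have h1 := hσ i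
      have h2 := hσ j
      rw [← hij, h1] at h2
      split_ifs at h2 with g1 g2 g2
      · rw [g1, g2]
      · exact absurd (h2 ▸ (aX j).resolve_left g2) hyX
      · exact absurd (h2 ▸ (aX i).resolve_left g1) hyX
      · exact h2
    have cross : ∀ i j, i ≠ j → Disjoint (P i) (Q (σ j)) := by
      intro i j hij
      rw [Set.disjoint_left]
      intro z hz1 hz2
      rcases Pz i z hz1 with g | ⟨g, gX⟩ <;> rcases Qz (σ j) z hz2 with g' | ⟨g', gX'⟩
      · exact hX (g.trans g'.symm)
      · exact g.mem_right gX'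
      · exact g'.mem_right gX
      · rw [hσ j] at g'
        split_ifs at g' with hc
        · exact hyX (g' ▸ gX)
        · exact hij (ainj (g.symm.trans g'))
    refine ⟨fun i => P i ∪ Q (σ i), fun i j hij => ?_, fun i => ?_⟩
    · simp only [Set.disjoint_union_left, Set.disjoint_union_right]
      exact ⟨⟨Pd i j hij, (cross j i hij.symm).symm⟩, cross i j hij, 
        Qd _ _ (fun h => hij (σinj i j h))⟩
    · have g1 : Lk G (P i ∪ Q (σ i)) S {a i} := 
        ((PL i).monoG hle).mono Set.subset_union_left subset_rfl subset_rfl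
      have g2 : Lk G (P i ∪ Q (σ i)) {b (σ i)} T := 
        ((QL (σ i)).monoG hle).symm.mono Set.subset_union_right subset_rfl subset_rfl
      refine g1.trans (Lk.trans ?_ g2)
      rw [hσ i]
      have m1 := g1.mem_right
      have m2 := g2.symm.mem_right
      rw [hσ i] at m2
      split_ifs at m2 ⊢ with hc
      · rw [hc] at m1 ⊢
        exact Lk.adj m1 m2 h1
      · exact Lk.refl m1

open Classical in
/-- A degree-type weight; on a shortest path between `S` and `T` it is always equal to two. -/
noncomputable def wt {V : Type} (G : SimpleGraph V) (S T P : Set V) (v : V) : ℕ :=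
  {u | u ∈ P ∧ G.Adj v u}.ncard + (if v ∈ S then 1 else 0) + (if v ∈ T then 1 else 0)

theorem tight {V : Type} {G : SimpleGraph V} {A S T : Set V} (h : Lk G A S T) :
    ∃ P ⊆ A, IsSTPath G S T P ∧ ∀ v ∈ P, wt G S T P v = 2 := by
  classical
  have hex : ∃ n, ∃ u ∈ S, ∃ v ∈ T, ∃ w : G.Walk u v, (∀ z ∈ w.support, z ∈ A) ∧ w.length = n := by
    obtain ⟨u, hu, v, hv, w, hw⟩ := h
    exact ⟨_, u, hu, v, hv, w, hw, rfl⟩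
  obtain ⟨u, hu, v, hv, w0, hw0, hlen0⟩ := Nat.find_spec hex
  have hmin0 : ∀ u' ∈ S, ∀ v' ∈ T, ∀ w' : G.Walk u' v', (∀ z ∈ w'.support, z ∈ A) →
      Nat.find hex ≤ w'.length := by
    intro u' hu' v' hv' w' hw'
    exact Nat.find_min' hex ⟨u', hu', v', hv', w', hw', rfl⟩
  obtain ⟨w, hwp, hw, hlen⟩ : ∃ w : G.Walk u v, w.IsPath ∧ (∀ z ∈ w.support, z ∈ A) ∧
      w.length ≤ Nat.find hex :=
    ⟨w0.bypass, w0.bypass_isPath, fun z hz => hw0 z (w0.support_bypass_subset_support hz),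
      hlen0 ▸ w0.length_bypass_le_length⟩
  have hmin : ∀ u' ∈ S, ∀ v' ∈ T, ∀ w' : G.Walk u' v', (∀ z ∈ w'.support, z ∈ A) →
      w.length ≤ w'.length := fun u' hu' v' hv' w' hw' => hlen.trans (hmin0 u' hu' v' hv' w' hw')
  have hdrop : ∀ i, ∀ z ∈ (w.drop i).support, z ∈ A := fun i z hz =>
    hw z ((w.isSubwalk_drop i).support_subset hz)
  have htake : ∀ i, ∀ z ∈ (w.take i).support, z ∈ A := fun i z hz =>
    hw z ((w.isSubwalk_take i).support_subset hz)
  have fS : ∀ i ≤ w.length, (w.getVert i ∈ S ↔ i = 0) := by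
    intro i hi
    refine ⟨fun h => ?_, fun h => by simpa [h] using hu⟩
    have := hmin _ h v hv (w.drop i) (hdrop i)
    rw [SimpleGraph.Walk.drop_length] at this
    omega
  have fT : ∀ i ≤ w.length, (w.getVert i ∈ T ↔ i = w.length) := by
    intro i hi
    refine ⟨fun h => ?_, fun h => by simpa [h] using hv⟩
    have := hmin u hu _ h (w.take i) (htake i)
    rw [SimpleGraph.Walk.take_length] at this
    omega
  have fA : ∀ i j, i < j → j ≤ w.length → G.Adj (w.getVert i) (w.getVert j) → j = i + 1 := by
    intro i j hij hj hadj
    have := hmin u hu v hv ((w.take i).append (SimpleGraph.Walk.cons hadj (w.drop j))) (by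
      intro z hz
      rw [SimpleGraph.Walk.mem_support_append_iff, SimpleGraph.Walk.support_cons,
        List.mem_cons] at hz
      rcases hz with hz | rfl | hz
      · exact htake _ _ hz
      · exact hw _ (w.getVert_mem_support i)
      · exact hdrop _ _ hz)
    rw [SimpleGraph.Walk.length_append, SimpleGraph.Walk.length_cons,
      SimpleGraph.Walk.take_length, SimpleGraph.Walk.drop_length] at this
    omega
  refine ⟨{x | x ∈ w.support}, fun z hz => hw z hz, ⟨u, v, w, hwp, hu, hv, rfl⟩, ?_⟩
  intro z hz
  obtain ⟨i, rfl, hi⟩ := SimpleGraph.Walk.mem_support_iff_exists_getVert.1 hz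
  have hnb : {a | a ∈ {x | x ∈ w.support} ∧ G.Adj (w.getVert i) a} =
      w.getVert '' {j | j ≤ w.length ∧ (j + 1 = i ∨ j = i + 1)} := by
    ext a
    constructor
    · rintro ⟨ha, hadj⟩
      obtain ⟨j, rfl, hj⟩ := SimpleGraph.Walk.mem_support_iff_exists_getVert.1 ha
      refine ⟨j, ⟨hj, ?_⟩, rfl⟩
      rcases lt_trichotomy i j with h | h | h
      · exact Or.inr (fA i j h hj hadj)
      · subst h; exact absurd hadj (G.loopless.irrefl _)
      · exact Or.inl (fA j i h hi hadj.symm).symm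
    · rintro ⟨j, ⟨hj, h⟩, rfl⟩
      refine ⟨w.getVert_mem_support j, ?_⟩
      rcases h with rfl | rfl
      · exact (w.adj_getVert_succ (by omega)).symm
      · exact w.adj_getVert_succ (by omega)
  have hcard : (w.getVert '' {j | j ≤ w.length ∧ (j + 1 = i ∨ j = i + 1)}).ncard =
      {j | j ≤ w.length ∧ (j + 1 = i ∨ j = i + 1)}.ncard :=
    (hwp.getVert_injOn.mono (fun j hj => hj.1)).ncard_image
  have hset : {j | j ≤ w.length ∧ (j + 1 = i ∨ j = i + 1)} =
      ↑((if i = 0 then ∅ else {i - 1} : Finset ℕ) ∪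
        (if i = w.length then ∅ else {i + 1} : Finset ℕ)) := by
    ext j
    by_cases h0 : i = 0 <;> by_cases h1 : i = w.length <;> simp only [h0, h1, if_true, if_false,
      Finset.coe_union, Finset.coe_singleton, Finset.coe_empty, Set.mem_union, Set.mem_singleton_iff,
      Set.mem_empty_iff_false, Set.mem_ofPred_eq] <;> grind
  unfold wt
  rw [hnb, hcard, hset, Set.ncard_coe_finset, Finset.card_union_of_disjoint]
  · simp only [fS i hi, fT i hi]
    by_cases h0 : i = 0 <;> by_cases h1 : i = w.length <;> simp [h0, h1] <;> grind
  · by_cases h0 : i = 0 <;> by_cases h1 : i = w.length <;> simp [h0, h1] 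

theorem IsSTPath.lk {V : Type} {G : SimpleGraph V} {A S T : Set V} (h : IsSTPath G S T A) :
    Lk G A S T := by
  obtain ⟨u, v, w, -, hu, hv, rfl⟩ := h
  exact ⟨u, hu, v, hv, w, fun z hz => hz⟩

theorem push {V : Type} {G H : SimpleGraph V} {A : Set V} {f : V → V}
    (hf : ∀ u ∈ A, ∀ v ∈ A, G.Adj u v → f u = f v ∨ H.Adj (f u) (f v))
    {u v : V} (w : G.Walk u v) (hw : ∀ z ∈ w.support, z ∈ A) :
    Lk H (f '' A) {f u} {f v} := by
  induction w with
  | nil => exact Lk.refl ⟨_, hw _ (by simp), rfl⟩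
  | @cons a b c h p ih =>
    have hp : ∀ z ∈ p.support, z ∈ A := fun z hz => hw z (by simp [hz])
    have ha : a ∈ A := hw a (by simp)
    have hb : b ∈ A := hp b (by simp)
    refine Lk.trans ?_ (ih hp)
    rcases hf a ha b hb h with h | h
    · rw [h]; exact Lk.refl ⟨b, hb, rfl⟩
    · exact Lk.adj ⟨a, ha, rfl⟩ ⟨b, hb, rfl⟩ h

theorem lift_walk {V : Type} {G H : SimpleGraph V} {W B : Set V} {f : V → V}
    (hfib : ∀ u ∈ W, f u ∈ B → Lk G {z | z ∈ W ∧ f z ∈ B} {u} {f u})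
    (hH : ∀ a b, H.Adj a b → ∃ u ∈ W, ∃ v ∈ W, f u = a ∧ f v = b ∧ G.Adj u v)
    {a b : V} (w : H.Walk a b) (hw : ∀ z ∈ w.support, z ∈ B) :
    ∀ u ∈ W, f u = a → ∀ v ∈ W, f v = b → Lk G {z | z ∈ W ∧ f z ∈ B} {u} {v} := by
  induction w with
  | nil =>
    intro u hu h1 v hv h2
    have hb := hw _ (SimpleGraph.Walk.start_mem_support _)
    refine (hfib u hu (h1 ▸ hb)).trans ?_
    rw [h1, ← h2]
    exact (hfib v hv (h2 ▸ hb)).symm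
  | @cons a b c h p ih =>
    intro u hu h1 v hv h2
    have hp : ∀ z ∈ p.support, z ∈ B := fun z hz => hw z (by simp [hz])
    have ha : a ∈ B := hw a (by simp)
    have hb : b ∈ B := hp b (by simp)
    obtain ⟨x, hx, y, hy, hxa, hyb, hadj⟩ := hH a b h
    refine Lk.trans (z := x) ?_ (Lk.trans (z := y) ?_ (ih hp y hy hyb v hv h2))
    · refine (hfib u hu (h1 ▸ ha)).trans ?_
      rw [h1, ← hxa]
      exact (hfib x hx (hxa ▸ ha)).symm
    · exact Lk.adj ⟨hx, hxa ▸ ha⟩ ⟨hy, hyb ▸ hb⟩ hadj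

/-- `S` and `T` cannot be separated inside `W` by fewer than `n` vertices. -/
def NS {V : Type} (G : SimpleGraph V) (S T W : Set V) (n : ℕ) : Prop :=
  ∀ X : Finset V, X.card < n → Lk G (W \ ↑X) S T

theorem step {V : Type} {G : SimpleGraph V} {Δ : ℕ}
    (hdeg : ∀ v : V, (G.neighborSet v).Finite ∧ (G.neighborSet v).ncard ≤ Δ)
    {S T W : Set V} (hW : W.Finite) {m : ℕ} (hns : NS G S T W ((Δ + 1) * m))
    (K : Set V) (hKW : K ⊆ W)
    (hK : ∀ v ∈ K, ∀ v' ∈ K, ∀ x, (x = v ∨ G.Adj v x) → (x = v' ∨ G.Adj v' x) → v = v') :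
    ∃ P : Fin m → Set V, (∀ i, P i ⊆ W) ∧ (∀ i, IsSTPath G S T (P i)) ∧
      (∀ i, ∀ v ∈ P i, wt G S T (P i) v = 2) ∧
      (∀ i j, i ≠ j → Disjoint (P i) (P j)) ∧
      ∀ i j, ∀ v ∈ P i, ∀ u ∈ P j, v ∈ K → G.Adj v u → i = j := by
  classical
  obtain ⟨f, hf1, hf2⟩ : ∃ f : V → V, (∀ v ∈ K, ∀ u, (u = v ∨ G.Adj v u) → f u = v) ∧
      ∀ u, f u = u ∨ (f u ∈ K ∧ (u = f u ∨ G.Adj (f u) u)) := by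
    have : ∀ u, ∃ y, (∀ v ∈ K, (u = v ∨ G.Adj v u) → y = v) ∧
        (y = u ∨ (y ∈ K ∧ (u = y ∨ G.Adj y u))) := by
      intro u
      by_cases h : ∃ v ∈ K, u = v ∨ G.Adj v u
      · obtain ⟨v, hv, h⟩ := h
        exact ⟨v, fun v' hv' h' => hK v hv v' hv' u h h', Or.inr ⟨hv, h⟩⟩
      · refine ⟨u, fun v hv h' => absurd ⟨v, hv, h'⟩ h, Or.inl rfl⟩
    choose f h using this
    exact ⟨f, fun v hv u => (h u).1 v hv, fun u => (h u).2⟩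
  have hf3 : ∀ u, u = f u ∨ G.Adj (f u) u := fun u =>
    (hf2 u).elim (fun h => Or.inl h.symm) (fun h => h.2)
  let H : SimpleGraph V :=
    { Adj := fun a b => a ≠ b ∧ ∃ u ∈ W, ∃ v ∈ W, f u = a ∧ f v = b ∧ G.Adj u v
      symm := ⟨by
        rintro a b ⟨h, u, hu, v, hv, h1, h2, h3⟩
        exact ⟨h.symm, v, hv, u, hu, h2, h1, h3.symm⟩⟩
      loopless := ⟨fun a h => h.1 rfl⟩ }
  have hHfin : H.edgeSet.Finite := by
    refine ((hW.prod hW).image (fun p : V × V => s(f p.1, f p.2))).subset ?_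
    intro e
    induction e using Sym2.ind with
    | _ a b =>
      rintro ⟨-, u, hu, v, hv, rfl, rfl, -⟩
      exact ⟨(u, v), ⟨hu, hv⟩, rfl⟩
  have hmenger := menger _ H hHfin rfl (f '' (S ∩ W)) (f '' (T ∩ W)) m (by
    intro X' hX'
    let N : V → Finset V := fun v => insert v (hdeg v).1.toFinset
    have hN : ∀ v, (N v).card ≤ Δ + 1 := by
      intro v
      refine (Finset.card_insert_le _ _).trans ?_
      rw [← Set.ncard_eq_toFinset_card _ (hdeg v).1]
      exact Nat.succ_le_succ (hdeg v).2
    obtain ⟨u, hu, v, hv, w, hw⟩ := hns (X'.biUnion N) (by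
      refine (Finset.card_biUnion_le_card_mul _ _ _ (fun v _ => hN v)).trans_lt ?_
      rw [mul_comm]
      exact Nat.mul_lt_mul_of_pos_left hX' (Nat.succ_pos _))
    have hwW : ∀ z ∈ w.support, z ∈ W := fun z hz => (hw z hz).1
    refine (push (H := H) (f := f) ?_ w hw).mono ?_ ?_ ?_
    · intro a ha b hb hab
      by_cases h : f a = f b
      · exact Or.inl h
      · exact Or.inr ⟨h, a, ha.1, b, hb.1, rfl, rfl, hab⟩
    · rintro _ ⟨z, hz, rfl⟩ hzX
      refine hz.2 ?_
      simp only [Finset.coe_biUnion, Set.mem_iUnion]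
      refine ⟨f z, hzX, ?_⟩
      simpa [N] using hf3 z
    · rintro _ rfl
      exact ⟨u, ⟨hu, hwW _ (by simp)⟩, rfl⟩
    · rintro _ rfl
      exact ⟨v, ⟨hv, hwW _ (by simp)⟩, rfl⟩)
  obtain ⟨B, hB, hBL⟩ := hmenger
  have hA : ∀ i, Lk G {z | z ∈ W ∧ f z ∈ B i} S T := by
    intro i
    obtain ⟨_, ⟨u, hu, rfl⟩, _, ⟨v, hv, rfl⟩, w, hw⟩ := hBL i
    refine (lift_walk (G := G) (H := H) (W := W) ?_ (fun a b h => h.2) w hw u hu.2 rfl v hv.2 rfl).mono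
      subset_rfl (by simpa using hu.1) (by simpa using hv.1)
    intro u hu huB
    rcases hf2 u with h | ⟨h, h'⟩
    · rw [h]; exact Lk.refl ⟨hu, huB⟩
    · have h2 : f (f u) = f u := hf1 _ h _ (Or.inl rfl)
      have h3 : f u ∈ {z | z ∈ W ∧ f z ∈ B i} := ⟨hKW h, by rw [h2]; exact huB⟩
      rcases h' with h' | h'
      · rw [← h']; exact Lk.refl ⟨hu, huB⟩
      · exact Lk.adj ⟨hu, huB⟩ h3 h'.symm
  choose P hPA hP hPw using fun i => tight (hA i)
  have uniq : ∀ i j z z', z ∈ P i → z' ∈ P j → f z = f z' → i = j := by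
    intro i j z z' hz hz' h
    by_contra hij
    exact Set.disjoint_left.1 (hB i j hij) (hPA i hz).2 (h ▸ (hPA j hz').2)
  refine ⟨P, fun i z hz => (hPA i hz).1, hP, hPw, ?_, ?_⟩
  · intro i j hij
    rw [Set.disjoint_left]
    intro z h1 h2
    exact hij (uniq i j z z h1 h2 rfl)
  · intro i j v hv u hu hvK hadj
    refine uniq i j v u hv hu ?_
    rw [hf1 v hvK v (Or.inl rfl), hf1 v hvK u (Or.inr hadj)]

theorem wt_mono {V : Type} {G : SimpleGraph V} {S T P W : Set V} {v : V}
    (hfin : (G.neighborSet v).Finite) (h : P ⊆ W) : wt G S T P v ≤ wt G S T W v := by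
  unfold wt
  have : {u | u ∈ P ∧ G.Adj v u}.ncard ≤ {u | u ∈ W ∧ G.Adj v u}.ncard :=
    Set.ncard_le_ncard (fun u hu => ⟨h hu.1, hu.2⟩) (hfin.subset fun u hu => hu.2)
  omega

theorem iter {V : Type} {G : SimpleGraph V} {Δ : ℕ}
    (hdeg : ∀ v : V, (G.neighborSet v).Finite ∧ (G.neighborSet v).ncard ≤ Δ)
    {S T W : Set V} (hW : W.Finite) (c : V → ℕ)
    (hc : ∀ v ∈ W, ∀ v' ∈ W, c v = c v' →
      ∀ x, (x = v ∨ G.Adj v x) → (x = v' ∨ G.Adj v' x) → v = v') (j : ℕ) :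
    ∀ n, NS G S T W ((Δ + 1) ^ j * n) →
      ∃ W' ⊆ W, NS G S T W' n ∧ ∀ v ∈ W', c v < j → wt G S T W' v ≤ 2 := by
  induction j with
  | zero => 
    intro n hn
    exact ⟨W, subset_rfl, by simpa using hn, by simp⟩
  | succ j ih =>
    intro n hn
    rw [pow_succ, mul_assoc] at hn
    obtain ⟨W1, hW1, hns, hw1⟩ := ih _ hn
    obtain ⟨P, hPW, hP, hPw, hPd, hPK⟩ := step hdeg (hW.subset hW1) hns {v | v ∈ W1 ∧ c v = j}
      (fun v hv => hv.1) (fun v hv v' hv' => hc v (hW1 hv.1) v' (hW1 hv'.1) (hv.2.trans hv'.2.symm))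
    have hsub : (⋃ i, P i) ⊆ W1 := Set.iUnion_subset hPW
    refine ⟨⋃ i, P i, hsub.trans hW1, ?_, ?_⟩
    · intro X hX
      by_contra hcon
      have : ∀ i, ∃ z, z ∈ P i ∧ z ∈ X := by
        intro i
        by_contra h
        push Not at h
        exact hcon ((hP i).lk.mono (fun z hz => ⟨Set.mem_iUnion.2 ⟨i, hz⟩, h z hz⟩) 
          subset_rfl subset_rfl)
      choose z hz hzX using this
      have hinj : Function.Injective z := by
        intro i i' h
        by_contra hne
        exact Set.disjoint_left.1 (hPd i i' hne) (hz i) (h ▸ hz i')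
      have := Finset.card_le_card_of_injOn (s := Finset.univ) z (fun i _ => hzX i) hinj.injOn
      simp at this
      omega
    · intro v hv hcv
      obtain ⟨i, hi⟩ := Set.mem_iUnion.1 hv
      rcases Nat.lt_succ_iff_lt_or_eq.1 hcv with h | h
      · exact (wt_mono (hdeg v).1 hsub).trans (hw1 v (hsub hv) h)
      · rw [← hPw i v hi]
        unfold wt
        have : {u | (u ∈ ⋃ i, P i) ∧ G.Adj v u} = {u | u ∈ P i ∧ G.Adj v u} := by
          ext u
          constructor
          · rintro ⟨hu, hadj⟩
            obtain ⟨i', hi'⟩ := Set.mem_iUnion.1 hu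
            obtain rfl := hPK i i' v hi u hi' ⟨hsub hv, h⟩ hadj
            exact ⟨hi', hadj⟩
          · rintro ⟨hu, hadj⟩
            exact ⟨Set.mem_iUnion.2 ⟨i, hu⟩, hadj⟩
        rw [this]

theorem greedy {V : Type} {G : SimpleGraph V} {Δ : ℕ}
    (hdeg : ∀ v : V, (G.neighborSet v).Finite ∧ (G.neighborSet v).ncard ≤ Δ) (W : Finset V) :
    ∃ c : V → ℕ, (∀ v, c v < (Δ + 1) * (Δ + 1) + 1) ∧ ∀ v ∈ W, ∀ v' ∈ W, c v = c v' →
      ∀ x, (x = v ∨ G.Adj v x) → (x = v' ∨ G.Adj v' x) → v = v' := by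
  classical
  let N : V → Finset V := fun v => insert v (hdeg v).1.toFinset
  have hN : ∀ v, (N v).card ≤ Δ + 1 := by
    intro v
    refine (Finset.card_insert_le _ _).trans ?_
    rw [← Set.ncard_eq_toFinset_card _ (hdeg v).1]
    exact Nat.succ_le_succ (hdeg v).2
  have hmem : ∀ v x, x ∈ N v ↔ (x = v ∨ G.Adj v x) := by
    intro v x; simp [N]
  induction W using Finset.induction_on with
  | empty => exact ⟨fun _ => 0, by simp, by simp⟩
  | insert a W ha ih =>
    obtain ⟨c, hc1, hc2⟩ := ih
    obtain ⟨col, hcol, hcol'⟩ : ∃ col ∈ Finset.range ((Δ + 1) * (Δ + 1) + 1), 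
        col ∉ ((N a).biUnion N).image c := by
      apply Finset.exists_mem_notMem_of_card_lt_card
      rw [Finset.card_range, Nat.lt_succ_iff]
      refine Finset.card_image_le.trans ?_
      refine (Finset.card_biUnion_le_card_mul _ _ _ (fun v _ => hN v)).trans ?_
      exact Nat.mul_le_mul_right _ (hN a)
    have key : ∀ v ∈ W, c v = col → ∀ x, (x = v ∨ G.Adj v x) → (x = a ∨ G.Adj a x) → False := by
      intro v hv hcv x h1 h2
      refine hcol' (Finset.mem_image.2 ⟨v, Finset.mem_biUnion.2 ⟨x, (hmem a x).2 h2, ?_⟩, hcv⟩)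
      rw [hmem]
      exact h1.imp Eq.symm (fun h => h.symm)
    refine ⟨Function.update c a col, ?_, ?_⟩
    · intro v
      by_cases h : v = a
      · subst h; simpa using hcol
      · simpa [h] using hc1 v
    · intro v hv v' hv' hcv x h1 h2
      rw [Finset.mem_insert] at hv hv'
      by_cases h : v = a <;> by_cases h' : v' = a
      · rw [h, h']
      · subst h
        simp only [Function.update_self, Function.update_of_ne h'] at hcv
        exact (key v' (hv'.resolve_left h') hcv.symm x h2 h1).elim
      · subst h'
        simp only [Function.update_self, Function.update_of_ne h] at hcv
        exact (key v (hv.resolve_left h) hcv x h1 h2).elim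
      · simp only [Function.update_of_ne h, Function.update_of_ne h'] at hcv
        exact hc2 v (hv.resolve_left h) v' (hv'.resolve_left h') hcv x h1 h2

theorem finite_case {V : Type} {G : SimpleGraph V} {Δ : ℕ}
    (hdeg : ∀ v : V, (G.neighborSet v).Finite ∧ (G.neighborSet v).ncard ≤ Δ) (W : Finset V)
    {S T : Set V} {k : ℕ}
    (h : NS G S T ↑W ((Δ + 1) ^ ((Δ + 1) * (Δ + 1) + 1) * ((Δ + 1) * k))) :
    HasKPaths G S T k 2 := by
  obtain ⟨c, hc1, hc2⟩ := greedy hdeg W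
  obtain ⟨W', hW', hns, hwt⟩ := iter hdeg W.finite_toSet c hc2 _ _ h
  obtain ⟨P, hPW, hP, hPw, hPd, -⟩ := step hdeg (W.finite_toSet.subset hW') hns ∅ (by simp)
    (by simp)
  refine ⟨P, hP, ?_⟩
  intro i j hij x y hx hy w
  have hxy : x ≠ y := by
    rintro rfl
    exact Set.disjoint_left.1 (hPd i j hij) hx hy
  have hadj : ¬ G.Adj x y := by
    intro hadj
    have h1 := hwt x (hPW i hx) (hc1 x)
    have h2 := hPw i x hx
    have h3 : {u | u ∈ P i ∧ G.Adj x u}.ncard < {u | u ∈ W' ∧ G.Adj x u}.ncard := by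
      apply Set.ncard_lt_ncard
      · refine ⟨fun u hu => ⟨hPW i hu.1, hu.2⟩, fun hsub => ?_⟩
        have h4 : y ∈ {u | u ∈ P i ∧ G.Adj x u} := hsub ⟨hPW j hy, hadj⟩
        exact Set.disjoint_left.1 (hPd i j hij) h4.1 hy
      · exact (hdeg x).1.subset fun u hu => hu.2
    unfold wt at h1 h2
    omega
  by_contra hlt
  push Not at hlt
  cases w with
  | nil => exact hxy rfl
  | cons h p =>
    cases p with
    | nil => exact hadj h
    | cons h' p => simp at hlt

/-- Bounded degree induced Menger (Theorem 4.1). -/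
theorem stmt_14 (Δ : ℕ) (hΔ : 1 ≤ Δ) :
    ∃ C : ℕ, 0 < C ∧ ∀ (V : Type) (G : SimpleGraph V),
      (∀ v : V, (G.neighborSet v).Finite ∧ (G.neighborSet v).ncard ≤ Δ) →
      ∀ k : ℕ, 1 ≤ k → ∀ S T : Set V,
        HasKPaths G S T k 2 ∨
        ∃ X : Finset V, X.card ≤ k * C ∧
          ∀ (u v : V) (w : G.Walk u v), w.IsPath → u ∈ S → v ∈ T →
            ∃ y ∈ w.support, y ∈ X := by
  refine ⟨(Δ + 1) ^ ((Δ + 1) * (Δ + 1) + 1) * (Δ + 1), by positivity, ?_⟩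
  intro V G hdeg k _ S T
  classical
  by_cases hk : HasKPaths G S T k 2
  · exact Or.inl hk
  right
  have hX : ∀ W : Finset V, ∃ X : Finset V, 
      X.card < (Δ + 1) ^ ((Δ + 1) * (Δ + 1) + 1) * ((Δ + 1) * k) ∧ ¬ Lk G (↑W \ ↑X) S T := by
    intro W
    by_contra hcon
    push Not at hcon
    exact hk (finite_case hdeg W hcon)
  choose X hXc hXs using hX
  let U : Ultrafilter (Finset V) := Ultrafilter.of Filter.atTop
  have hU : ∀ W0 : Finset V, ∀ᶠ W in (U : Filter (Finset V)), W0 ⊆ W := fun W0 =>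
    Ultrafilter.of_le Filter.atTop (Filter.eventually_ge_atTop W0)
  let Z : Set V := {v | ∀ᶠ W in (U : Filter (Finset V)), v ∈ X W}
  have hZ : ∀ Y : Finset V, ↑Y ⊆ Z → 
      Y.card ≤ k * ((Δ + 1) ^ ((Δ + 1) * (Δ + 1) + 1) * (Δ + 1)) := by
    intro Y hY
    have : ∀ᶠ W in (U : Filter (Finset V)), ∀ y ∈ Y, y ∈ X W := 
      (Filter.eventually_all_finset Y).2 fun y hy => hY hy
    obtain ⟨W, hW⟩ := this.exists
    have h1 := Finset.card_le_card (show Y ⊆ X W from hW)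
    have h2 := hXc W
    have h3 : (Δ + 1) ^ ((Δ + 1) * (Δ + 1) + 1) * ((Δ + 1) * k) = 
      k * ((Δ + 1) ^ ((Δ + 1) * (Δ + 1) + 1) * (Δ + 1)) := by ring
    omega
  have hZf : Z.Finite := by
    by_contra hinf
    obtain ⟨Y, hY, hYc⟩ := Set.Infinite.exists_subset_card_eq hinf 
      (k * ((Δ + 1) ^ ((Δ + 1) * (Δ + 1) + 1) * (Δ + 1)) + 1)
    have := hZ Y hY
    omega
  refine ⟨hZf.toFinset, hZ _ (by simp), ?_⟩
  intro u v w _ hu hv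
  have h1 : ∀ᶠ W in (U : Filter (Finset V)), ∃ y : {y // y ∈ w.support.toFinset}, y.1 ∈ X W := by
    filter_upwards [hU w.support.toFinset] with W hW
    by_contra hcon
    push Not at hcon
    refine hXs W ⟨u, hu, v, hv, w, fun z hz => ⟨hW (by simpa using hz), ?_⟩⟩
    exact hcon ⟨z, by simpa using hz⟩
  rw [Ultrafilter.eventually_exists_iff] at h1
  obtain ⟨⟨y, hy⟩, hyZ⟩ := h1
  exact ⟨y, by simpa using hy, hZf.mem_toFinset.2 hyZ⟩
end

section
/- If the conjectured coarse Menger theorem with relaxed separator size holds, then necessarily n ≥ ⌊3k/2⌋: there exist, for every r ≥ 1 and ℓ > 0, a graph G and sets S, T ⊆ V(G) such that G does not contain 2r+1 paths between S and T pairwise at distance at least three, yet for every set X ⊆ V(G) with |X| ≤ 3r−1 there is an S–T path whose every vertex has distance more than ℓ from every member of X. -/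
namespace CM

/-- Connection inside a vertex set `X`. -/
def J {V : Type} (G : SimpleGraph V) (X : Set V) (p q : V) : Prop :=
  p ∈ X ∧ Relation.ReflTransGen (fun x y => G.Adj x y ∧ x ∈ X ∧ y ∈ X) p q

theorem J.symm {V : Type} {G : SimpleGraph V} {X : Set V} {p q : V} (h : J G X p q) :
    J G X q p := by
  obtain ⟨hp, h⟩ := h
  induction h with
  | refl => exact ⟨hp, .refl⟩
  | tail _ hbc ih =>
    exact ⟨hbc.2.2, Relation.ReflTransGen.head ⟨hbc.1.symm, hbc.2.2, hbc.2.1⟩ ih.2⟩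

theorem J.trans {V : Type} {G : SimpleGraph V} {X : Set V} {p q s : V} (h : J G X p q)
    (h' : J G X q s) : J G X p s := ⟨h.1, h.2.trans h'.2⟩

theorem J.mem_left {V : Type} {G : SimpleGraph V} {X : Set V} {p q : V} (h : J G X p q) :
    p ∈ X := h.1

theorem J.mem_right {V : Type} {G : SimpleGraph V} {X : Set V} {p q : V} (h : J G X p q) :
    q ∈ X := h.symm.1

theorem J.mono {V : Type} {G : SimpleGraph V} {X Y : Set V} (hXY : X ⊆ Y) {p q : V}
    (h : J G X p q) : J G Y p q :=
  ⟨hXY h.1, Relation.ReflTransGen.mono (fun _ _ hab => ⟨hab.1, hXY hab.2.1, hXY hab.2.2⟩) _ _ h.2⟩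

theorem J.single {V : Type} {G : SimpleGraph V} {X : Set V} {p q : V} (hp : p ∈ X) (hq : q ∈ X)
    (h : G.Adj p q) : J G X p q := ⟨hp, .single ⟨h, hp, hq⟩⟩

theorem J.rfl {V : Type} {G : SimpleGraph V} {X : Set V} {p : V} (hp : p ∈ X) :
    J G X p p := ⟨hp, .refl⟩

/-- First exit lemma. -/
theorem FE {V : Type} {G : SimpleGraph V} {X A D : Set V} {p q : V} (h : J G X p q)
    (hp : p ∈ A) (hq : q ∈ A → q ∈ D)
    (hcl : ∀ x ∈ A, x ∉ D → ∀ y ∈ X, G.Adj x y → y ∈ A) :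
    ∃ r ∈ D, J G (X ∩ A) p r := by
  obtain ⟨hpX, h⟩ := h
  induction h using Relation.ReflTransGen.head_induction_on with
  | refl => exact ⟨q, hq hp, J.rfl ⟨hpX, hp⟩⟩
  | @head a c hab _ ih =>
    by_cases haD : a ∈ D
    · exact ⟨a, haD, J.rfl ⟨hpX, hp⟩⟩
    · have hc : c ∈ A := hcl a hp haD c hab.2.2 hab.1
      obtain ⟨r, hr, hJ⟩ := ih hc hab.2.2
      exact ⟨r, hr, J.trans (J.single (X := X ∩ A) ⟨hpX, hp⟩ ⟨hab.2.2, hc⟩ hab.1) hJ⟩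

/-- Two vertex sets at distance at least three. -/
def Far {V : Type} (G : SimpleGraph V) (b c : Set V) : Prop :=
  ∀ x ∈ b, ∀ y ∈ c, x ≠ y ∧ ¬ G.Adj x y ∧ ∀ z, G.Adj x z → ¬ G.Adj z y

theorem Far.symm {V : Type} {G : SimpleGraph V} {b c : Set V} (h : Far G b c) : Far G c b :=
  fun x hx y hy => ⟨(h y hy x hx).1.symm, fun ha => (h y hy x hx).2.1 ha.symm,
    fun z h1 h2 => (h y hy x hx).2.2 z h2.symm h1.symm⟩

/-- `X` connects `P` to `Q`. -/
def Tr {V : Type} (G : SimpleGraph V) (X P Q : Set V) : Prop :=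
  ∃ p ∈ P, ∃ q ∈ Q, J G X p q

theorem Tr.symm {V : Type} {G : SimpleGraph V} {X P Q : Set V} (h : Tr G X P Q) : Tr G X Q P := by
  obtain ⟨p, hp, q, hq, h⟩ := h
  exact ⟨q, hq, p, hp, h.symm⟩

theorem Tr.exit {V : Type} {G : SimpleGraph V} {b Z A P Q D : Set V} (h : Tr G (b ∩ Z) P Q)
    (hP : P ⊆ A) (hQ : ∀ q ∈ Q, q ∈ A → q ∈ D)
    (hcl : ∀ x ∈ A, x ∉ D → ∀ y ∈ b, y ∈ Z → G.Adj x y → y ∈ A) : Tr G (b ∩ A) P D := by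
  obtain ⟨p, hp, q, hq, h⟩ := h
  obtain ⟨r, hr, hJ⟩ := FE h (hP hp) (hQ q hq) (fun x hx hxD y hy => hcl x hx hxD y hy.1 hy.2)
  refine ⟨p, hp, r, hr, J.mono ?_ hJ⟩
  rintro x ⟨⟨h1, _⟩, h2⟩
  exact ⟨h1, h2⟩

/-- The main property of a zone. -/
def PL {V : Type} (G : SimpleGraph V) (Z : Set V) (α β γ δ v : V) : Prop :=
  ∀ b c : Set V, Far G b c → Tr G (b ∩ Z) {α, β} {γ, δ} → Tr G (c ∩ Z) {α, β} {γ, δ} →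
    (v ∈ b ∧ α ∈ b ∧ δ ∈ b) ∨ (v ∈ c ∧ α ∈ c ∧ δ ∈ c)

def PK {V : Type} (G : SimpleGraph V) (Z : Set V) (α β γ δ v : V) : Prop :=
  ∀ b c : Set V, Far G b c → v ∉ c → α ∈ c → Tr G (b ∩ Z) {α, β} {γ, δ, v} →
    Tr G (c ∩ Z) {α, β} {γ, δ} → False

structure Good {V : Type} (G : SimpleGraph V) (Z : Set V) (α β γ δ v : V) : Prop where
  l : PL G Z α β γ δ v
  k : PK G Z α β γ δ v
  k' : PK G Z δ γ β α v

theorem PL.mirror {V : Type} {G : SimpleGraph V} {Z : Set V} {α β γ δ v : V}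
    (h : PL G Z α β γ δ v) : PL G Z δ γ β α v := by
  intro b c hf hb hc
  rw [Set.pair_comm δ γ, Set.pair_comm β α] at hb hc
  rcases h b c hf hb.symm hc.symm with h | h
  · exact Or.inl ⟨h.1, h.2.2, h.2.1⟩
  · exact Or.inr ⟨h.1, h.2.2, h.2.1⟩

/-- Gluing of two zones. -/
structure Glue {V : Type} (G : SimpleGraph V) (Z Z1 Z2 : Set V)
    (α β γ δ v p1 p2 μ ν : V) : Prop where
  cov : ∀ x ∈ Z, x ∈ Z1 ∨ x ∈ Z2 ∨ x = v
  e12 : ∀ x ∈ Z1, x ≠ μ → x ≠ ν → ∀ y ∈ Z2, G.Adj x y → y ∈ Z1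
  e21 : ∀ x ∈ Z2, x ≠ μ → x ≠ ν → ∀ y ∈ Z1, G.Adj x y → y ∈ Z2
  t1 : ∀ x ∈ Z1, G.Adj x v → x = p1
  t2 : ∀ x ∈ Z2, G.Adj x v → x = p2
  a1 : G.Adj p1 v
  a2 : G.Adj p2 v
  α1 : α ∈ Z1
  β1 : β ∈ Z1
  γ2 : γ ∈ Z2
  δ2 : δ ∈ Z2
  α2 : α ∉ Z2
  β2 : β ∉ Z2
  γ1 : γ ∉ Z1
  δ1 : δ ∉ Z1
  v1 : v ∉ Z1
  v2 : v ∉ Z2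

theorem Glue.mirror {V : Type} {G : SimpleGraph V} {Z Z1 Z2 : Set V}
    {α β γ δ v p1 p2 μ ν : V} (g : Glue G Z Z1 Z2 α β γ δ v p1 p2 μ ν) :
    Glue G Z Z2 Z1 δ γ β α v p2 p1 ν μ where
  cov x hx := by rcases g.cov x hx with h | h | h <;> simp [h]
  e12 x hx h1 h2 := g.e21 x hx h2 h1
  e21 x hx h1 h2 := g.e12 x hx h2 h1
  t1 := g.t2
  t2 := g.t1
  a1 := g.a2
  a2 := g.a1
  α1 := g.δ2
  β1 := g.γ2
  γ2 := g.β1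
  δ2 := g.α1
  α2 := g.δ1
  β2 := g.γ1
  γ1 := g.β2
  δ1 := g.α2
  v1 := g.v2
  v2 := g.v1

theorem Glue.left {V : Type} {G : SimpleGraph V} {Z Z1 Z2 : Set V}
    {α β γ δ v p1 p2 μ ν : V} (g : Glue G Z Z1 Z2 α β γ δ v p1 p2 μ ν) {b : Set V} (hv : v ∉ b)
    (h : Tr G (b ∩ Z) {α, β} {γ, δ}) : Tr G (b ∩ Z1) {α, β} {μ, ν} := by
  refine h.exit ?_ ?_ ?_
  · rintro x (rfl | rfl)
    · exact g.α1
    · exact g.β1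
  · rintro x (rfl | rfl) hx
    · exact absurd hx g.γ1
    · exact absurd hx g.δ1
  · intro x hx hxD y hy hyZ hxy
    simp only [Set.mem_insert_iff, Set.mem_singleton_iff, not_or] at hxD
    rcases g.cov y hyZ with h | h | rfl
    · exact h
    · exact g.e12 x hx hxD.1 hxD.2 y h hxy
    · exact absurd hy hv

theorem Glue.right {V : Type} {G : SimpleGraph V} {Z Z1 Z2 : Set V}
    {α β γ δ v p1 p2 μ ν : V} (g : Glue G Z Z1 Z2 α β γ δ v p1 p2 μ ν) {b : Set V} (hv : v ∉ b)
    (h : Tr G (b ∩ Z) {α, β} {γ, δ}) : Tr G (b ∩ Z2) {μ, ν} {γ, δ} := by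
  have h' := h.symm
  rw [Set.pair_comm γ δ, Set.pair_comm α β] at h'
  have := g.mirror.left hv h'
  rw [Set.pair_comm δ γ, Set.pair_comm ν μ] at this
  exact this.symm

theorem Glue.leftTop {V : Type} {G : SimpleGraph V} {Z Z1 Z2 : Set V}
    {α β γ δ v p1 p2 μ ν : V} (g : Glue G Z Z1 Z2 α β γ δ v p1 p2 μ ν) {b : Set V}
    (h : Tr G (b ∩ Z) {α, β} {γ, δ, v}) : Tr G (b ∩ Z1) {α, β} {μ, ν, p1} := by
  refine h.exit ?_ ?_ ?_
  · rintro x (rfl | rfl)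
    · exact g.α1
    · exact g.β1
  · rintro x (rfl | rfl | rfl) hx
    · exact absurd hx g.γ1
    · exact absurd hx g.δ1
    · exact absurd hx g.v1
  · intro x hx hxD y hy hyZ hxy
    simp only [Set.mem_insert_iff, Set.mem_singleton_iff, not_or] at hxD
    rcases g.cov y hyZ with h | h | rfl
    · exact h
    · exact g.e12 x hx hxD.1 hxD.2.1 y h hxy
    · exact absurd (g.t1 x hx hxy) hxD.2.2

theorem Tr.memL {V : Type} {G : SimpleGraph V} {b Z Q : Set V} {α β : V}
    (h : Tr G (b ∩ Z) {α, β} Q) : α ∈ b ∨ β ∈ b := by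
  obtain ⟨p, rfl | rfl, q, hq, h⟩ := h
  · exact Or.inl h.1.1
  · exact Or.inr h.1.1

theorem stepK {V : Type} {G : SimpleGraph V} {Z Z1 Z2 : Set V}
    {α β γ δ v p1 p2 μ ν : V} (g : Glue G Z Z1 Z2 α β γ δ v p1 p2 μ ν)
    (k1 : PK G Z1 α β μ ν p1) (l1 : PL G Z1 α β μ ν p1) (l2 : PL G Z2 μ ν γ δ p2) :
    PK G Z α β γ δ v := by
  intro b c hf hvc hαc hb hc
  by_cases hp : p1 ∈ c
  · have hvb : v ∉ b := fun hv => (hf v hv p1 hp).2.1 g.a1.symm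
    have hp1b : p1 ∉ b := fun h => (hf _ h _ hp).1 rfl
    have hp2b : p2 ∉ b := fun h => (hf _ h _ hp).2.2 v g.a2 g.a1.symm
    have hb' : Tr G (b ∩ Z) {α, β} {γ, δ} := by
      obtain ⟨p, hp, q, hq, h⟩ := hb
      refine ⟨p, hp, q, ?_, h⟩
      rcases hq with rfl | rfl | rfl
      · simp
      · simp
      · exact absurd h.mem_right.1 hvb
    have h1 := l1 b c hf (g.left hvb hb') (g.left hvc hc)
    have h2 := l2 b c hf (g.right hvb hb') (g.right hvc hc)
    have h3 := (g.right hvb hb').memL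
    rcases h1 with h1 | h1
    · exact hp1b h1.1
    rcases h2 with h2 | h2
    · exact hp2b h2.1
    rcases h3 with h3 | h3
    · exact (hf _ h3 _ h2.2.1).1 rfl
    · exact (hf _ h3 _ h1.2.2).1 rfl
  · exact k1 b c hf hp hαc (g.leftTop hb) (g.left hvc hc)

theorem stepL_aux {V : Type} {G : SimpleGraph V} {Z : Set V}
    {α β γ δ v : V} (k : PK G Z α β γ δ v) (k' : PK G Z δ γ β α v) {b c : Set V}
    (hf : Far G b c) (hb : Tr G (b ∩ Z) {α, β} {γ, δ}) (hc : Tr G (c ∩ Z) {α, β} {γ, δ})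
    (hv : v ∈ b) : v ∈ b ∧ α ∈ b ∧ δ ∈ b := by
  have hvc : v ∉ c := fun h => (hf _ hv _ h).1 rfl
  have aux : ∀ {α β γ δ : V}, PK G Z α β γ δ v → Tr G (b ∩ Z) {α, β} {γ, δ} →
      Tr G (c ∩ Z) {α, β} {γ, δ} → α ∈ b := by
    intro α β γ δ k hb hc
    have hα : α ∉ c := by
      intro hα
      refine k b c hf hvc hα ?_ hc
      obtain ⟨p, hp, q, hq, h⟩ := hb
      refine ⟨p, hp, q, ?_, h⟩
      rcases hq with rfl | rfl <;> simp
    rcases hc.memL with h | h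
    · exact absurd h hα
    rcases hb.memL with h' | h'
    · exact h'
    · exact absurd rfl (hf _ h' _ h).1
  refine ⟨hv, aux k hb hc, aux k' ?_ ?_⟩
  · rw [Set.pair_comm δ γ, Set.pair_comm β α]; exact hb.symm
  · rw [Set.pair_comm δ γ, Set.pair_comm β α]; exact hc.symm

theorem step {V : Type} {G : SimpleGraph V} {Z Z1 Z2 : Set V}
    {α β γ δ v p1 p2 μ ν : V} (g : Glue G Z Z1 Z2 α β γ δ v p1 p2 μ ν)
    (h1 : Good G Z1 α β μ ν p1) (h2 : Good G Z2 μ ν γ δ p2) : Good G Z α β γ δ v := by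
  have k := stepK g h1.k h1.l h2.l
  have k' := stepK g.mirror h2.k' h2.l.mirror h1.l.mirror
  refine ⟨?_, k, k'⟩
  intro b c hf hb hc
  by_cases hvb : v ∈ b
  · exact Or.inl (stepL_aux k k' hf hb hc hvb)
  by_cases hvc : v ∈ c
  · exact Or.inr (stepL_aux k k' hf.symm hc hb hvc)
  exfalso
  have l1 := h1.l b c hf (g.left hvb hb) (g.left hvc hc)
  have l2 := h2.l b c hf (g.right hvb hb) (g.right hvc hc)
  have mb := (g.right hvb hb).memL
  have mc := (g.right hvc hc).memL
  rcases l1 with l1 | l1 <;> rcases l2 with l2 | l2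
  · rcases mc with mc | mc
    · exact (hf _ l2.2.1 _ mc).1 rfl
    · exact (hf _ l1.2.2 _ mc).1 rfl
  · exact (hf _ l1.1 _ l2.1).2.2 v g.a1 g.a2.symm
  · exact (hf _ l2.1 _ l1.1).2.2 v g.a2 g.a1.symm
  · rcases mb with mb | mb
    · exact (hf _ mb _ l2.2.1).1 rfl
    · exact (hf _ mb _ l1.2.2).1 rfl

/-- Leaf zones. -/
theorem leafGood {V : Type} {G : SimpleGraph V} {Z Aα Aδ : Set V} {α β γ δ v : V}
    (hα : α ∈ Aα) (hδ : δ ∈ Aδ)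
    (cα : ∀ x ∈ Aα, ∀ y ∈ Z, G.Adj x y → y ∈ Aα ∨ y = β ∨ y = v)
    (cδ : ∀ x ∈ Aδ, ∀ y ∈ Z, G.Adj x y → y ∈ Aδ ∨ y = γ ∨ y = v)
    (nαγ : γ ∉ Aα) (nαδ : δ ∉ Aα) (nδα : α ∉ Aδ) (nδβ : β ∉ Aδ)
    (nγβ : γ ≠ β) (nγv : γ ≠ v) (nδβ' : δ ≠ β) (nδv : δ ≠ v) (nαγ' : α ≠ γ) (nαv : α ≠ v)
    (nβv : β ≠ v) : Good G Z α β γ δ v := by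
  have key : ∀ {Aα : Set V} {α β γ δ : V}, α ∈ Aα →
      (∀ x ∈ Aα, ∀ y ∈ Z, G.Adj x y → y ∈ Aα ∨ y = β ∨ y = v) → γ ∉ Aα → δ ∉ Aα →
      γ ≠ β → γ ≠ v → δ ≠ β → δ ≠ v → PK G Z α β γ δ v := by
    intro Aα α β γ δ hα cα n1 n2 n3 n4 n5 n6 b c hf hv hαc hb hc
    have hβb : β ∈ b := by
      rcases hb.memL with h | h
      · exact absurd rfl (hf _ h _ hαc).1
      · exact h
    have hc' : Tr G (c ∩ Z) {α} {γ, δ} := by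
      obtain ⟨p, hp, q, hq, h⟩ := hc
      refine ⟨p, ?_, q, hq, h⟩
      rcases hp with rfl | rfl
      · rfl
      · exact absurd rfl (hf _ hβb _ h.1.1).1
    have h2 := hc'.exit (A := Aα ∪ {β, v}) (D := {β, v}) (by rintro x rfl; exact Or.inl hα)
      (by
        rintro q (rfl | rfl) hq
        · rcases hq with h | h
          · exact absurd h n1
          · exact h
        · rcases hq with h | h
          · exact absurd h n2
          · exact h)
      (by
        intro x hx hxD y hy hyZ hxy
        rcases hx with hx | hx
        · exact cα x hx y hyZ hxy
        · exact absurd hx hxD)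
    rcases h2.symm.memL with h | h
    · exact (hf _ hβb _ h).1 rfl
    · exact hv h
  have k := key (α := α) (β := β) (γ := γ) (δ := δ) hα cα nαγ nαδ nγβ nγv nδβ' nδv
  have k' := key (α := δ) (β := γ) (γ := β) (δ := α) hδ cδ nδβ nδα nγβ.symm nβv nαγ' nαv
  refine ⟨?_, k, k'⟩
  intro b c hf hb hc
  by_cases hvb : v ∈ b
  · exact Or.inl (stepL_aux k k' hf hb hc hvb)
  by_cases hvc : v ∈ c
  · exact Or.inr (stepL_aux k k' hf.symm hc hb hvc)
  exfalso
  have wk : ∀ {x : Set V}, Tr G (x ∩ Z) {α, β} {γ, δ} → Tr G (x ∩ Z) {α, β} {γ, δ, v} := by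
    rintro x ⟨p, hp, q, hq, h⟩
    refine ⟨p, hp, q, ?_, h⟩
    rcases hq with rfl | rfl <;> simp
  rcases hb.memL with h1 | h1
  · exact k c b hf.symm hvb h1 (wk hc) hb
  rcases hc.memL with h2 | h2
  · exact k b c hf hvc h2 (wk hb) hc
  · exact (hf _ h1 _ h2).1 rfl

end CM

namespace CM

/-- Vertices of one copy of the construction. -/
inductive Vtx : Type
  | pos (n : ℕ) : Vtx
  | leg (k i : ℕ) : Vtx
  | nd (h i : ℕ) : Vtx

open Vtx

/-- Oriented edges of one copy. -/
def E (M : ℕ) : Vtx → Vtx → Prop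
  | pos n, pos m => m = n + 1
  | pos n, leg k i => (n = 2 * (k * M) ∧ i = 0) ∨ (n = 2 * (k * M) + 3 * M ∧ i = 2 * M)
  | leg k i, leg k' j => k' = k ∧ j = i + 1 ∧ i < 2 * M
  | leg k i, nd h j => i = M ∧ h = 0 ∧ j = k / 2
  | nd h j, nd h' j' => h' = h + 1 ∧ j' = j / 2
  | _, _ => False

/-- One copy of the construction. -/
def H (M : ℕ) : SimpleGraph Vtx where
  Adj x y := E M x y ∨ E M y x
  symm := ⟨fun x y h => h.symm⟩
  loopless := ⟨by
    intro x h
    rcases x with n | ⟨k, i⟩ | ⟨h, i⟩ <;> simp [E] at h⟩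

/-- The apex of height `h` and index `i`. -/
def ap (M : ℕ) : ℕ → ℕ → Vtx
  | 0, i => leg i M
  | h + 1, i => nd h i

/-- The zone over the interval `[a, e)`, of height `h`. -/
def W (M a e h : ℕ) : Set Vtx := {x | match x with
  | pos n => 2 * (a * M) ≤ n ∧ n ≤ 2 * (e * M) + M
  | leg k j => a ≤ k ∧ k < e ∧ j ≤ 2 * M
  | nd g j => g < h ∧ a ≤ j * 2 ^ (g + 1) ∧ (j + 1) * 2 ^ (g + 1) ≤ e}

theorem W_pos {M a e h n : ℕ} : pos n ∈ W M a e h ↔ 2 * (a * M) ≤ n ∧ n ≤ 2 * (e * M) + M := Iff.rfl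
theorem W_leg {M a e h k j : ℕ} : leg k j ∈ W M a e h ↔ a ≤ k ∧ k < e ∧ j ≤ 2 * M := Iff.rfl
theorem W_nd {M a e h g j : ℕ} : nd g j ∈ W M a e h ↔
  g < h ∧ a ≤ j * 2 ^ (g + 1) ∧ (j + 1) * 2 ^ (g + 1) ≤ e := Iff.rfl

theorem lt_mul {k m M : ℕ} (h : k < m) : k * M + M ≤ m * M := by
  have := Nat.mul_le_mul_right M h
  rw [Nat.succ_mul] at this; exact this

theorem leaf (M i : ℕ) (hM : 0 < M) : Good (H M) (W M i (i + 1) 0) (pos (2 * (i * M)))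
    (pos (2 * (i * M) + M)) (pos (2 * ((i + 1) * M))) (pos (2 * ((i + 1) * M) + M)) (leg i M) := by
  have e : (i + 1) * M = i * M + M := by ring
  have key : ∀ k, i ≤ k → k < i + 1 → k = i := fun k h1 h2 => by omega
  rw [e]
  refine leafGood
    (Aα := {x | (∃ n, x = pos n ∧ 2 * (i * M) ≤ n ∧ n < 2 * (i * M) + M) ∨ ∃ j, x = leg i j ∧ j < M})
    (Aδ := {x | (∃ n, x = pos n ∧ 2 * (i * M) + 2 * M < n ∧ n ≤ 2 * (i * M) + 3 * M) ∨
      ∃ j, x = leg i j ∧ M < j ∧ j ≤ 2 * M}) ?_ ?_ ?_ ?_ ?_ ?_ ?_ ?_ ?_ ?_ ?_ ?_ ?_ ?_ ?_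
  · simp [hM]
  · simp; omega
  · rintro x (⟨n, rfl, h1, h2⟩ | ⟨j, rfl, h1⟩) y hy hxy <;> rcases y with m | ⟨k, j'⟩ | ⟨g, j'⟩ <;>
      simp only [W_pos, W_leg, W_nd, e] at hy <;> simp [H, E] at hxy ⊢
    · omega
    · obtain rfl := key k hy.1 hy.2.1
      omega
    · omega
    · omega
    · omega
  · rintro x (⟨n, rfl, h1, h2⟩ | ⟨j, rfl, h1⟩) y hy hxy <;> rcases y with m | ⟨k, j'⟩ | ⟨g, j'⟩ <;>
      simp only [W_pos, W_leg, W_nd, e] at hy <;> simp [H, E] at hxy ⊢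
    · omega
    · obtain rfl := key k hy.1 hy.2.1
      omega
    · omega
    · omega
    · omega
  all_goals simp <;> omega

theorem glue (M i h : ℕ) (hM : 0 < M) (a m e : ℕ) (ha : a = (2 * i) * 2 ^ h)
    (hm : m = (2 * i + 1) * 2 ^ h) (he : e = (2 * i + 2) * 2 ^ h) :
    Glue (H M) (W M a e (h + 1)) (W M a m h) (W M m e h) (pos (2 * (a * M)))
    (pos (2 * (a * M) + M)) (pos (2 * (e * M))) (pos (2 * (e * M) + M)) (nd h i)
    (ap M h (2 * i)) (ap M h (2 * i + 1)) (pos (2 * (m * M))) (pos (2 * (m * M) + M)) := by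
  have hq : 0 < 2 ^ h := by positivity
  have ham : a < m := by subst ha hm; exact Nat.mul_lt_mul_of_pos_right (by omega) hq
  have hme : m < e := by subst he hm; exact Nat.mul_lt_mul_of_pos_right (by omega) hq
  have ham' := lt_mul (M := M) ham
  have hme' := lt_mul (M := M) hme
  have half : ∀ k : ℕ, k / 2 * 2 ≤ k ∧ k < (k / 2 + 1) * 2 := fun k => by omega
  have halfp : ∀ k p : ℕ, k / 2 * (p * 2) ≤ k * p ∧ (k + 1) * p ≤ (k / 2 + 1) * (p * 2) := by
    intro k p
    obtain ⟨h1, h2⟩ := half k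
    constructor
    · calc k / 2 * (p * 2) = (k / 2 * 2) * p := by ring
        _ ≤ k * p := Nat.mul_le_mul_right _ h1
    · calc (k + 1) * p ≤ ((k / 2 + 1) * 2) * p := Nat.mul_le_mul_right _ h2
        _ = _ := by ring
  have lts : ∀ k p : ℕ, 0 < p → k * p < (k + 1) * p := fun k p hp =>
    Nat.mul_lt_mul_of_pos_right (by omega) hp
  have pp : ∀ g : ℕ, 0 < 2 ^ g := fun g => by positivity
  refine ⟨?_, ?_, ?_, ?_, ?_, ?_, ?_, ?_, ?_, ?_, ?_, ?_, ?_, ?_, ?_, ?_, ?_⟩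
  · rintro (n | ⟨k, j⟩ | ⟨g, j⟩) hx <;> simp only [W_pos, W_leg, W_nd] at hx ⊢
    · omega
    · omega
    · obtain ⟨h1, h2, h3⟩ := hx
      rcases Nat.lt_succ_iff_lt_or_eq.1 h1 with h1 | rfl
      · obtain ⟨t, rfl⟩ := Nat.exists_eq_add_of_lt h1
        have e1 : 2 ^ (g + t + 1) = 2 ^ t * 2 ^ (g + 1) := by ring
        rw [e1, ← mul_assoc] at ha hm he
        rcases Nat.lt_or_ge j ((2 * i + 1) * 2 ^ t) with hj | hj
        · left
          refine ⟨by omega, h2, ?_⟩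
          rw [hm]; exact Nat.mul_le_mul_right _ hj
        · right; left
          refine ⟨by omega, ?_, h3⟩
          rw [hm]; exact Nat.mul_le_mul_right _ hj
      · right; right
        have e1 : a = i * 2 ^ (g + 1) := by rw [ha]; ring
        have e2 : e = (i + 1) * 2 ^ (g + 1) := by rw [he]; ring
        rw [e1] at h2
        rw [e2] at h3
        have h4 := Nat.le_of_mul_le_mul_right h2 (pp _)
        have h5 := Nat.le_of_mul_le_mul_right h3 (pp _)
        obtain rfl : i = j := by omega
        rfl
  · rintro (n | ⟨k, j⟩ | ⟨g, j⟩) hx n1 n2 (n' | ⟨k', j'⟩ | ⟨g', j'⟩) hy hxy <;>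
      simp only [W_pos, W_leg, W_nd] at hx hy ⊢ <;> simp [H, E] at hxy n1 n2
    · omega
    · exfalso
      rcases Nat.eq_or_lt_of_le hy.1 with h | h
      · subst h; omega
      · have := lt_mul (M := M) h; omega
    · have := lt_mul (M := M) hx.2.1; omega
    · omega
    · exfalso
      obtain ⟨-, rfl, rfl⟩ := hxy
      have := half k
      simp at hy
      omega
    · exfalso
      obtain ⟨-, rfl, rfl⟩ := hxy
      have := half k'
      simp at hx
      omega
    · exfalso
      rcases hxy with ⟨rfl, rfl⟩ | ⟨rfl, rfl⟩
      · have := halfp j (2 ^ (g + 1))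
        have := lts j (2 ^ (g + 1)) (pp _)
        rw [pow_succ 2 (g + 1)] at hy
        omega
      · have := halfp j' (2 ^ (g' + 1))
        have := lts j' (2 ^ (g' + 1)) (pp _)
        rw [pow_succ 2 (g' + 1)] at hx
        omega
  · rintro (n | ⟨k, j⟩ | ⟨g, j⟩) hx n1 n2 (n' | ⟨k', j'⟩ | ⟨g', j'⟩) hy hxy <;>
      simp only [W_pos, W_leg, W_nd] at hx hy ⊢ <;> simp [H, E] at hxy n1 n2
    · omega
    · exfalso
      rcases Nat.eq_or_lt_of_le (Nat.succ_le_of_lt hy.2.1) with h | h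
      · have e1 : m * M = k' * M + M := by rw [← h, Nat.succ_mul]
        omega
      · have := lt_mul (M := M) h
        have e1 : (k' + 1) * M = k' * M + M := by ring
        rw [Nat.succ_eq_add_one] at this
        omega
    · have := Nat.mul_le_mul_right M hx.1
      omega
    · omega
    · exfalso
      obtain ⟨-, rfl, rfl⟩ := hxy
      have := half k
      simp at hy
      omega
    · exfalso
      obtain ⟨-, rfl, rfl⟩ := hxy
      have := half k'
      simp at hx
      omega
    · exfalso
      rcases hxy with ⟨rfl, rfl⟩ | ⟨rfl, rfl⟩
      · have := halfp j (2 ^ (g + 1))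
        have := lts j (2 ^ (g + 1)) (pp _)
        rw [pow_succ 2 (g + 1)] at hy
        omega
      · have := halfp j' (2 ^ (g' + 1))
        have := lts j' (2 ^ (g' + 1)) (pp _)
        rw [pow_succ 2 (g' + 1)] at hx
        omega
  · rintro (n | ⟨k, j⟩ | ⟨g, j⟩) hx hxy <;>
      simp only [W_pos, W_leg, W_nd] at hx <;> simp [H, E] at hxy
    · obtain ⟨rfl, rfl, rfl⟩ := hxy
      simp at ha hm
      simp only [ap, leg.injEq, and_true]
      omega
    · rcases hxy with ⟨rfl, rfl⟩ | ⟨rfl, rfl⟩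
      · simp only [ap, nd.injEq, true_and]
        have h3 := hx.2.2
        rw [hm] at h3
        have h4 := Nat.le_of_mul_le_mul_right h3 (pp _)
        omega
      · omega
  · rintro (n | ⟨k, j⟩ | ⟨g, j⟩) hx hxy <;>
      simp only [W_pos, W_leg, W_nd] at hx <;> simp [H, E] at hxy
    · obtain ⟨rfl, rfl, rfl⟩ := hxy
      simp at he hm
      simp only [ap, leg.injEq, and_true]
      omega
    · rcases hxy with ⟨rfl, rfl⟩ | ⟨rfl, rfl⟩
      · simp only [ap, nd.injEq, true_and]
        have h3 := hx.2.1
        rw [hm] at h3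
        have h4 := Nat.le_of_mul_le_mul_right h3 (pp _)
        omega
      · omega
  · cases h <;> simp [ap, H, E]
  · cases h <;> simp [ap, H, E] <;> omega
  all_goals simp only [W_pos, W_nd] <;> omega

theorem zone (M : ℕ) (hM : 0 < M) (h : ℕ) : ∀ i a e : ℕ, a = i * 2 ^ h → e = (i + 1) * 2 ^ h →
    Good (H M) (W M a e h) (pos (2 * (a * M))) (pos (2 * (a * M) + M)) (pos (2 * (e * M)))
      (pos (2 * (e * M) + M)) (ap M h i) := by
  induction h with
  | zero =>
    intro i a e ha he
    simp at ha he
    subst ha he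
    exact leaf M a hM
  | succ h ih =>
    intro i a e ha he
    have ha' : a = (2 * i) * 2 ^ h := by rw [ha]; ring
    have he' : e = (2 * i + 2) * 2 ^ h := by rw [he]; ring
    exact step (glue M i h hM a _ e ha' rfl he') (ih (2 * i) _ _ ha' rfl) (ih (2 * i + 1) _ _ rfl he')

end CM

namespace CM

open Vtx

theorem closedRoot (M d : ℕ) (hM : 0 < M) (hd : 0 < d) (x : Vtx) (hx : x ∈ W M 0 (2 ^ d) d)
    (h1 : x ≠ pos (2 * (2 ^ d * M))) (h2 : x ≠ pos (2 * (2 ^ d * M) + M)) (h3 : x ≠ ap M d 0)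
    (y : Vtx) (hxy : (H M).Adj x y) : y ∈ W M 0 (2 ^ d) d := by
  obtain ⟨d, rfl⟩ : ∃ d', d = d' + 1 := ⟨d - 1, by omega⟩
  have e2 : 2 ^ (d + 1) = 2 * 2 ^ d := by ring
  have pp : ∀ g : ℕ, 0 < 2 ^ g := fun g => by positivity
  rcases x with n | ⟨k, j⟩ | ⟨g, j⟩ <;> rcases y with n' | ⟨k', j'⟩ | ⟨g', j'⟩ <;>
      simp only [W_pos, W_leg, W_nd] at hx ⊢ <;> simp [H, E, ap] at hxy h1 h2 h3 ⊢
  · omega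
  · rcases lt_trichotomy k' (2 ^ (d + 1)) with h | h | h
    · omega
    · subst h; omega
    · have := lt_mul (M := M) h; omega
  · have := lt_mul (M := M) hx.2.1; omega
  · omega
  · obtain ⟨-, rfl, rfl⟩ := hxy
    simp
    omega
  · obtain ⟨h9, rfl, rfl⟩ := hxy
    simp at hx
    omega
  · obtain ⟨h4, h5, h6⟩ := hx
    rcases hxy with ⟨rfl, rfl⟩ | ⟨rfl, rfl⟩
    · rcases Nat.lt_or_ge g d with h | h
      · obtain ⟨t, rfl⟩ := Nat.exists_eq_add_of_lt h
        have e1 : 2 ^ (g + t + 1 + 1) = (2 * 2 ^ t) * 2 ^ (g + 1) := by ring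
        rw [e1] at h6 ⊢
        have h7 := Nat.le_of_mul_le_mul_right h6 (pp _)
        have h8 : j / 2 + 1 ≤ 2 ^ t := by omega
        refine ⟨by omega, ?_⟩
        calc (j / 2 + 1) * 2 ^ (g + 1 + 1) ≤ 2 ^ t * 2 ^ (g + 1 + 1) := Nat.mul_le_mul_right _ h8
          _ = _ := by ring
      · exfalso
        obtain rfl : g = d := by omega
        have h7 : (j + 1) * 2 ^ (g + 1) ≤ 1 * 2 ^ (g + 1) := by omega
        have h8 := Nat.le_of_mul_le_mul_right h7 (pp _)
        omega
    · refine ⟨by omega, le_trans ?_ h6⟩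
      calc (j' + 1) * 2 ^ (g' + 1) ≤ ((j' / 2 + 1) * 2) * 2 ^ (g' + 1) :=
            Nat.mul_le_mul_right _ (by omega)
        _ = _ := by ring

theorem noTwo (M d : ℕ) (hM : 0 < M) (hd : 0 < d) (b c : Set Vtx) (hf : Far (H M) b c)
    (hb : ap M d 0 ∉ b) (hc : ap M d 0 ∉ c)
    (tb : Tr (H M) b {pos 0, pos M} {pos (2 * (2 ^ d * M)), pos (2 * (2 ^ d * M) + M)})
    (tc : Tr (H M) c {pos 0, pos M} {pos (2 * (2 ^ d * M)), pos (2 * (2 ^ d * M) + M)}) :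
    False := by
  have hN : 0 < 2 ^ d := by positivity
  have hNM := lt_mul (M := M) hN
  have aux : ∀ b : Set Vtx, ap M d 0 ∉ b →
      Tr (H M) b {pos 0, pos M} {pos (2 * (2 ^ d * M)), pos (2 * (2 ^ d * M) + M)} →
      Tr (H M) (b ∩ W M 0 (2 ^ d) d) {pos 0, pos M}
        {pos (2 * (2 ^ d * M)), pos (2 * (2 ^ d * M) + M)} := by
    rintro b hb ⟨p, hp, q, hq, hJ⟩
    obtain ⟨r, hr, hJ'⟩ := FE (A := W M 0 (2 ^ d) d)
      (D := {pos (2 * (2 ^ d * M)), pos (2 * (2 ^ d * M) + M), ap M d 0}) hJ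
      (by rcases hp with rfl | rfl <;> simp only [W_pos] <;> omega)
      (by intro _; rcases hq with rfl | rfl <;> simp)
      (by
        intro x hx hxD y _ hxy
        simp only [Set.mem_insert_iff, Set.mem_singleton_iff, not_or] at hxD
        exact closedRoot M d hM hd x hx hxD.1 hxD.2.1 hxD.2.2 y hxy)
    refine ⟨p, hp, r, ?_, hJ'⟩
    rcases hr with rfl | rfl | rfl
    · simp
    · simp
    · exact absurd hJ'.mem_right.1 hb
  have g := (zone M hM d 0 0 (2 ^ d) (by simp) (by simp)).l b c hf
    (by simpa using aux b hb tb) (by simpa using aux c hc tc)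
  rcases g with g | g
  · exact hb g.1
  · exact hc g.1

/-- The trapezoid wave. -/
def wv (M t : ℕ) : ℤ :=
  if t ≤ M then t else if t ≤ 2 * M then M else if t ≤ 3 * M then 3 * M - t else 0

def fh : Vtx → ℤ
  | nd h _ => h + 1
  | _ => 0

def fφ (M : ℕ) : Vtx → ℤ
  | nd _ _ => 0
  | leg _ i => |(i : ℤ) - M|
  | pos _ => M

def fw (L : ℕ) : Vtx → ℤ
  | nd _ _ => L
  | leg k i => if k % 2 = 0 then L - min (L : ℤ) |(i : ℤ) - 2 * L| else L + min (L : ℤ) |(i : ℤ) - 2 * L|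
  | pos n => wv (2 * L) (n % (4 * (2 * L)))

def Lip (M : ℕ) (f : Vtx → ℤ) : Prop := ∀ x y, E M x y → |f x - f y| ≤ 1

theorem lip_h (M : ℕ) : Lip M fh := by
  rintro (n | ⟨k, j⟩ | ⟨g, j⟩) (n' | ⟨k', j'⟩ | ⟨g', j'⟩) hxy <;> simp [E] at hxy <;> simp [fh]
  · simp [hxy.2.1]
  · simp [hxy.1]

theorem lip_φ (M : ℕ) : Lip M (fφ M) := by
  rintro (n | ⟨k, j⟩ | ⟨g, j⟩) (n' | ⟨k', j'⟩ | ⟨g', j'⟩) hxy <;> simp [E] at hxy <;>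
    simp only [fφ] <;> grind

theorem mod_succ (n m : ℕ) (hm : 0 < m) : ((n + 1) % m = n % m + 1 ∧ n % m + 1 < m) ∨
    ((n + 1) % m = 0 ∧ n % m + 1 = m) := by
  have h := Nat.mod_lt n hm
  have e : n = m * (n / m) + n % m := (Nat.div_add_mod n m).symm
  rcases Nat.lt_or_ge (n % m + 1) m with h1 | h1
  · left
    refine ⟨?_, h1⟩
    conv_lhs => rw [e, add_assoc, Nat.mul_add_mod, Nat.mod_eq_of_lt h1]
  · right
    have h2 : n % m + 1 = m := by omega
    refine ⟨?_, h2⟩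
    conv_lhs => rw [e, add_assoc, h2]
    simp

theorem mod_val (m q t : ℕ) (ht : t < m) : (m * q + t) % m = t := by
  rw [Nat.mul_add_mod, Nat.mod_eq_of_lt ht]

theorem lip_w (L : ℕ) (hL : 0 < L) : Lip (2 * L) (fw L) := by
  rintro (n | ⟨k, j⟩ | ⟨g, j⟩) (n' | ⟨k', j'⟩ | ⟨g', j'⟩) hxy <;> simp only [E] at hxy <;>
    simp only [fw]
  · subst hxy
    have := mod_succ n (4 * (2 * L)) (by omega)
    generalize (n + 1) % (4 * (2 * L)) = s at *
    generalize n % (4 * (2 * L)) = t at *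
    simp only [wv]
    grind
  · rcases Nat.even_or_odd' k' with ⟨q, rfl | rfl⟩
    · rcases hxy with ⟨rfl, rfl⟩ | ⟨rfl, rfl⟩
      · have := mod_val (4 * (2 * L)) q 0 (by omega)
        rw [show 2 * (2 * q * (2 * L)) = 4 * (2 * L) * q + 0 by ring, this]
        simp [wv]
        grind
      · have := mod_val (4 * (2 * L)) q (3 * (2 * L)) (by omega)
        rw [show 2 * (2 * q * (2 * L)) + 3 * (2 * L) = 4 * (2 * L) * q + 3 * (2 * L) by ring, this]
        simp [wv]
        grind
    · have h1 : (2 * q + 1) % 2 = 1 := by omega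
      rcases hxy with ⟨rfl, rfl⟩ | ⟨rfl, rfl⟩
      · have := mod_val (4 * (2 * L)) q (2 * (2 * L)) (by omega)
        rw [show 2 * ((2 * q + 1) * (2 * L)) = 4 * (2 * L) * q + 2 * (2 * L) by ring, this, h1]
        simp [wv]
        grind
      · have := mod_val (4 * (2 * L)) (q + 1) (2 * L) (by omega)
        rw [show 2 * ((2 * q + 1) * (2 * L)) + 3 * (2 * L) = 4 * (2 * L) * (q + 1) + 2 * L by ring,
          this, h1]
        simp [wv]
        grind
  · obtain ⟨rfl, rfl, h⟩ := hxy
    grind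
  · obtain ⟨rfl, rfl, h⟩ := hxy
    simp
  · simp

/-- The three candidate sets. -/
def UP : Set Vtx := {x | ∃ n, x = pos n}
def U0 (L : ℕ) : Set Vtx :=
  {x | (∃ n, x = pos n ∧ wv (2 * L) (n % (4 * (2 * L))) = 0) ∨ ∃ k i, x = leg k i ∧ k % 2 = 0}
def U1 (L : ℕ) : Set Vtx :=
  {x | (∃ n, x = pos n ∧ wv (2 * L) (n % (4 * (2 * L))) = 2 * L) ∨ ∃ k i, x = leg k i ∧ k % 2 = 1}

theorem connPos (M : ℕ) (U : Set Vtx) (a b : ℕ) (h : ∀ t ≤ b, pos (a + t) ∈ U) :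
    J (H M) U (pos a) (pos (a + b)) := by
  induction b with
  | zero => exact J.rfl (h 0 le_rfl)
  | succ b ih =>
    refine (ih fun t ht => h t (by omega)).trans (J.single (h b (by omega)) (h _ le_rfl) ?_)
    simp [H, E]; omega

theorem connLeg (M : ℕ) (U : Set Vtx) (k b : ℕ) (hb : b ≤ 2 * M) (h : ∀ t ≤ b, leg k t ∈ U) :
    J (H M) U (leg k 0) (leg k b) := by
  induction b with
  | zero => exact J.rfl (h 0 le_rfl)
  | succ b ih =>
    refine (ih (by omega) fun t ht => h t (by omega)).trans
      (J.single (h b (by omega)) (h _ le_rfl) ?_)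
    simp [H, E]; omega

theorem connLeg' (M : ℕ) (U : Set Vtx) (k : ℕ) (h : ∀ t, leg k t ∈ U)
    (h1 : pos (2 * (k * M)) ∈ U) (h2 : pos (2 * (k * M) + 3 * M) ∈ U) :
    J (H M) U (pos (2 * (k * M))) (pos (2 * (k * M) + 3 * M)) :=
  ((J.single h1 (h 0) (by simp [H, E])).trans (connLeg M U k (2 * M) le_rfl fun t _ => h t)).trans
    (J.single (h _) h2 (by simp [H, E]))

theorem conn0 (L : ℕ) (hL : 0 < L) (j : ℕ) :
    J (H (2 * L)) (U0 L) (pos 0) (pos (2 * ((2 * j) * (2 * L)))) := by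
  have m0 : ∀ j, pos (2 * ((2 * j) * (2 * L))) ∈ U0 L := by
    intro j
    refine Or.inl ⟨_, rfl, ?_⟩
    rw [show 2 * (2 * j * (2 * L)) = 4 * (2 * L) * j + 0 by ring, mod_val _ _ _ (by omega)]
    simp [wv]
  have m3 : ∀ j t, t ≤ 2 * L → pos (2 * ((2 * j) * (2 * L)) + 3 * (2 * L) + t) ∈ U0 L := by
    intro j t ht
    rcases Nat.lt_or_ge t (2 * L) with h | h
    · refine Or.inl ⟨_, rfl, ?_⟩
      rw [show 2 * (2 * j * (2 * L)) + 3 * (2 * L) + t = 4 * (2 * L) * j + (3 * (2 * L) + t) by ring,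
        mod_val _ _ _ (by omega)]
      simp only [wv]
      grind
    · obtain rfl : t = 2 * L := by omega
      convert m0 (j + 1) using 2
      ring
  induction j with
  | zero => simpa using J.rfl (G := H (2 * L)) (m0 0)
  | succ j ih =>
    refine (ih.trans (connLeg' _ _ (2 * j) (fun t => Or.inr ⟨_, _, rfl, by omega⟩) (m0 j)
      (by simpa using m3 j 0 (by omega)))).trans ?_
    convert connPos (2 * L) (U0 L) (2 * ((2 * j) * (2 * L)) + 3 * (2 * L)) (2 * L) (m3 j) using 2
    ring

theorem conn1 (L : ℕ) (hL : 0 < L) (j : ℕ) :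
    J (H (2 * L)) (U1 L) (pos (2 * L)) (pos (2 * ((2 * j) * (2 * L)) + 2 * L)) := by
  have m1 : ∀ j t, t ≤ 2 * L → pos (2 * ((2 * j) * (2 * L)) + 2 * L + t) ∈ U1 L := by
    intro j t ht
    refine Or.inl ⟨_, rfl, ?_⟩
    rw [show 2 * (2 * j * (2 * L)) + 2 * L + t = 4 * (2 * L) * j + (2 * L + t) by ring,
        mod_val _ _ _ (by omega)]
    simp only [wv]
    grind
  induction j with
  | zero => simpa using J.rfl (G := H (2 * L)) (m1 0 0 (by omega))
  | succ j ih =>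
    have c1 := connPos (2 * L) (U1 L) (2 * ((2 * j) * (2 * L)) + 2 * L) (2 * L) (m1 j)
    have e1 : 2 * ((2 * j) * (2 * L)) + 2 * L + 2 * L = 2 * ((2 * j + 1) * (2 * L)) := by ring
    have e2 : 2 * ((2 * (j + 1)) * (2 * L)) + 2 * L = 2 * ((2 * j + 1) * (2 * L)) + 3 * (2 * L) := by
      ring
    rw [e1] at c1
    rw [e2]
    refine (ih.trans c1).trans (connLeg' _ _ (2 * j + 1) (fun t => Or.inr ⟨_, _, rfl, by omega⟩) ?_ ?_)
    · rw [← e1]; exact m1 j _ le_rfl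
    · rw [← e2]; simpa using m1 (j + 1) 0 (by omega)

theorem connP (M n : ℕ) : J (H M) UP (pos 0) (pos n) := by
  simpa using connPos M UP 0 n (fun t _ => ⟨_, rfl⟩)

/-- Disjoint union of `r` copies. -/
def K (r M : ℕ) : SimpleGraph (Fin r × Vtx) where
  Adj p q := p.1 = q.1 ∧ (H M).Adj p.2 q.2
  symm := ⟨fun _ _ h => ⟨h.1.symm, h.2.symm⟩⟩
  loopless := ⟨fun x h => (H M).loopless.irrefl x.2 h.2⟩

theorem walkLip {r M : ℕ} {f : Vtx → ℤ} (hf : Lip M f) {p q : Fin r × Vtx} (w : (K r M).Walk p q) :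
    |f p.2 - f q.2| ≤ w.length := by
  induction w with
  | nil => simp
  | cons h w ih =>
    rename_i a b c
    have h1 : |f a.2 - f b.2| ≤ 1 := by
      rcases h.2 with h | h
      · exact hf _ _ h
      · rw [abs_sub_comm]; exact hf _ _ h
    have := abs_sub_le (f a.2) (f b.2) (f c.2)
    simp only [SimpleGraph.Walk.length_cons]
    push_cast
    linarith

theorem walkCopy {r M : ℕ} {p q : Fin r × Vtx} (w : (K r M).Walk p q) : p.1 = q.1 := by
  induction w with
  | nil => exact Eq.refl _
  | cons h w ih => exact h.1.trans ih

theorem distLip {r M ℓ : ℕ} {f : Vtx → ℤ} (hf : Lip M f) {p q : Fin r × Vtx}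
    (w : DistLE (K r M) p q ℓ) : |f p.2 - f q.2| ≤ ℓ := by
  obtain ⟨w, hw⟩ := w
  exact (walkLip hf w).trans (by exact_mod_cast hw)

theorem pathOf {r M : ℕ} {U : Set Vtx} {u v : Vtx} (h : J (H M) U u v) (c : Fin r) :
    ∃ w : (K r M).Walk (c, u) (c, v), w.IsPath ∧ ∀ y ∈ w.support, y.1 = c ∧ y.2 ∈ U := by
  classical
  have : ∃ w : (K r M).Walk (c, u) (c, v), ∀ y ∈ w.support, y.1 = c ∧ y.2 ∈ U := by
    obtain ⟨hu, h⟩ := h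
    induction h using Relation.ReflTransGen.head_induction_on with
    | refl => exact ⟨.nil, by simpa using hu⟩
    | @head a b hab _ ih =>
      obtain ⟨w, hw⟩ := ih hab.2.2
      have hadj : (K r M).Adj (c, a) (c, b) := ⟨Eq.refl _, hab.1⟩
      refine ⟨.cons hadj w, ?_⟩
      intro y hy
      rw [SimpleGraph.Walk.support_cons, List.mem_cons] at hy
      rcases hy with rfl | hy
      · exact ⟨rfl, hu⟩
      · exact hw y hy
  obtain ⟨w, hw⟩ := this
  exact ⟨w.bypass, w.bypass_isPath, fun y hy => hw y (w.support_bypass_subset_support hy)⟩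

theorem three {r ℓ : ℕ} (X : Finset (Fin r × Vtx)) (c : Fin r) {xr xp x0 x1 : Fin r × Vtx}
    {yp y0 y1 : Vtx} (mr : xr ∈ X) (mp : xp ∈ X) (m0 : x0 ∈ X) (m1 : x1 ∈ X)
    (hp : yp ∈ UP) (h0 : y0 ∈ U0 (2 * ℓ + 1)) (h1 : y1 ∈ U1 (2 * ℓ + 1))
    (dr : DistLE (K r (2 * (2 * ℓ + 1))) xr (c, ap (2 * (2 * ℓ + 1)) (2 * ℓ + 1) 0) ℓ)
    (dp : DistLE (K r (2 * (2 * ℓ + 1))) xp (c, yp) ℓ)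
    (d0 : DistLE (K r (2 * (2 * ℓ + 1))) x0 (c, y0) ℓ)
    (d1 : DistLE (K r (2 * (2 * ℓ + 1))) x1 (c, y1) ℓ) :
    3 ≤ (X.filter (fun x => x.1 = c)).card := by
  have cr : xr.1 = c := walkCopy dr.choose
  have cp : xp.1 = c := walkCopy dp.choose
  have c0 : x0.1 = c := walkCopy d0.choose
  have c1 : x1.1 = c := walkCopy d1.choose
  have ne : ∀ x y, DistLE (K r (2 * (2 * ℓ + 1))) x (c, y) ℓ → fh y = 0 → xr ≠ x := by
    rintro x y hx hy rfl
    have a := distLip (lip_h _) hx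
    have b := distLip (lip_h _) dr
    simp only [hy] at a
    have e : fh (ap (2 * (2 * ℓ + 1)) (2 * ℓ + 1) 0) = 2 * ℓ + 1 := by simp [ap, fh]
    simp only [e] at b
    clear * - a b
    grind
  have np := ne _ _ dp (by obtain ⟨n, rfl⟩ := hp; rfl)
  have n0 := ne _ _ d0 (by rcases h0 with ⟨n, rfl, -⟩ | ⟨n, i, rfl, -⟩ <;> rfl)
  have n1 := ne _ _ d1 (by rcases h1 with ⟨n, rfl, -⟩ | ⟨n, i, rfl, -⟩ <;> rfl)
  have nn : ¬ (xp = x0 ∧ xp = x1) := by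
    rintro ⟨rfl, rfl⟩
    have a := distLip (lip_φ _) dp
    have b := distLip (lip_φ _) d0
    have b' := distLip (lip_φ _) d1
    have a0 := distLip (lip_w (2 * ℓ + 1) (by omega)) d0
    have a1 := distLip (lip_w (2 * ℓ + 1) (by omega)) d1
    have e0 : fw (2 * ℓ + 1) y0 = 0 := by
      obtain ⟨n, rfl⟩ := hp
      rcases h0 with ⟨n, rfl, h⟩ | ⟨k, i, rfl, h⟩
      · exact h
      · simp only [fφ, fw, h] at a b ⊢
        push_cast at *
        grind
    have e1 : fw (2 * ℓ + 1) y1 = 2 * (2 * ℓ + 1) := by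
      obtain ⟨n, rfl⟩ := hp
      rcases h1 with ⟨n, rfl, h⟩ | ⟨k, i, rfl, h⟩
      · simpa [fw] using h
      · simp only [fφ, fw, h] at a b' ⊢
        push_cast at *
        grind
    simp only [e0] at a0
    simp only [e1] at a1
    grind
  apply Finset.two_lt_card.2
  have F : ∀ x, x ∈ X → x.1 = c → x ∈ X.filter (fun x => x.1 = c) := fun x h h' =>
    Finset.mem_filter.2 ⟨h, h'⟩
  by_cases h : xp = x0
  · exact ⟨xr, F _ mr cr, xp, F _ mp cp, x1, F _ m1 c1, np, n1, fun h' => nn ⟨h, h'⟩⟩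
  · exact ⟨xr, F _ mr cr, xp, F _ mp cp, x0, F _ m0 c0, np, n0, h⟩

end CM

namespace CM

open Vtx

theorem walkJ {r M : ℕ} {p q : Fin r × Vtx} (w : (K r M).Walk p q) :
    J (H M) {x | (p.1, x) ∈ w.support} p.2 q.2 := by
  induction w with
  | nil => exact J.rfl (by simp)
  | @cons a b c h w ih =>
    have h1 : a.1 = b.1 := h.1
    have ih' : J (H M) {x | (a.1, x) ∈ (SimpleGraph.Walk.cons h w).support} b.2 c.2 := by
      refine J.mono ?_ ih
      intro x hx
      have hx' : (b.1, x) ∈ w.support := hx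
      show (a.1, x) ∈ (SimpleGraph.Walk.cons h w).support
      rw [SimpleGraph.Walk.support_cons, h1]
      exact List.mem_cons_of_mem _ hx'
    refine J.trans (J.single ?_ ih'.mem_left h.2) ih'
    show (a.1, a.2) ∈ (SimpleGraph.Walk.cons h w).support
    simp

theorem farOf {r M : ℕ} {A B : Set (Fin r × Vtx)} (h : SetDistGE (K r M) A B 3) (c : Fin r) :
    Far (H M) {x | (c, x) ∈ A} {x | (c, x) ∈ B} := by
  intro x hx y hy
  refine ⟨?_, ?_, ?_⟩
  · rintro rfl
    have := h hx hy .nil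
    simp at this
  · intro hxy
    have hadj : (K r M).Adj (c, x) (c, y) := ⟨Eq.refl _, hxy⟩
    have := h hx hy (.cons hadj .nil)
    simp at this
  · intro z h1 h2
    have hadj : (K r M).Adj (c, x) (c, z) := ⟨Eq.refl _, h1⟩
    have hadj' : (K r M).Adj (c, z) (c, y) := ⟨Eq.refl _, h2⟩
    have := h hx hy (.cons hadj (.cons hadj' .nil))
    simp at this

def SS (r M d : ℕ) : Set (Fin r × Vtx) :=
  {p | p.2 = ap M d 0 ∨ p.2 = pos 0 ∨ p.2 = pos M}
def TT (r M d : ℕ) : Set (Fin r × Vtx) :=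
  {p | p.2 = ap M d 0 ∨ p.2 = pos (2 * (2 ^ d * M)) ∨ p.2 = pos (2 * (2 ^ d * M) + M)}

theorem part1 (r M d : ℕ) (hM : 0 < M) (hd : 0 < d) :
    ¬ HasKPaths (K r M) (SS r M d) (TT r M d) (2 * r + 1) 3 := by
  rintro ⟨P, hP, hfar⟩
  choose u v w _ hu hv hPw using hP
  obtain ⟨c, hc⟩ := Fintype.exists_lt_card_fiber_of_mul_lt_card (fun i => (u i).1) (n := 2)
    (by simp; omega)
  obtain ⟨i, hi, j, hj, k, hk, hij, hik, hjk⟩ := Finset.two_lt_card.1 hc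
  simp only [Finset.mem_filter, Finset.mem_univ, true_and] at hi hj hk
  have tr : ∀ i, (u i).1 = c → ap M d 0 ∉ {x | (c, x) ∈ P i} →
      Tr (H M) {x | (c, x) ∈ P i} {pos 0, pos M}
        {pos (2 * (2 ^ d * M)), pos (2 * (2 ^ d * M) + M)} := by
    intro i hi hr
    have hJ := walkJ (w i)
    have e : {x | ((u i).1, x) ∈ (w i).support} = {x | (c, x) ∈ P i} := by
      rw [hi, hPw i]; rfl
    rw [e] at hJ
    refine ⟨_, ?_, _, ?_, hJ⟩
    · rcases hu i with h | h
      · exact absurd (h ▸ hJ.mem_left) hr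
      · exact h
    · rcases hv i with h | h
      · exact absurd (h ▸ hJ.mem_right) hr
      · exact h
  have two : ∀ i j, i ≠ j → (u i).1 = c → (u j).1 = c →
      (c, ap M d 0) ∈ P i ∨ (c, ap M d 0) ∈ P j := by
    intro i j hij hi hj
    by_contra hcon
    rw [not_or] at hcon
    exact noTwo M d hM hd _ _ (farOf (hfar i j hij) c) hcon.1 hcon.2 (tr i hi hcon.1)
      (tr j hj hcon.2)
  have one : ∀ i j, i ≠ j → (c, ap M d 0) ∈ P i → (c, ap M d 0) ∈ P j → False := by
    intro i j hij hi hj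
    exact (farOf (hfar i j hij) c _ hi _ hj).1 rfl
  rcases two i j hij hi hj with h1 | h1
  · rcases two j k hjk hj hk with h2 | h2
    · exact one i j hij h1 h2
    · exact one i k hik h1 h2
  · rcases two i k hik hi hk with h2 | h2
    · exact one i j hij h2 h1
    · exact one j k hjk h1 h2

theorem part2 (r ℓ : ℕ) (hr : 1 ≤ r) (X : Finset (Fin r × Vtx)) (hX : X.card ≤ 3 * r - 1) :
    ∃ (u v : Fin r × Vtx) (w : (K r (2 * (2 * ℓ + 1))).Walk u v), w.IsPath ∧
      u ∈ SS r (2 * (2 * ℓ + 1)) (2 * ℓ + 1) ∧ v ∈ TT r (2 * (2 * ℓ + 1)) (2 * ℓ + 1) ∧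
      ∀ x ∈ X, ∀ y ∈ w.support, ¬ DistLE (K r (2 * (2 * ℓ + 1))) x y ℓ := by
  by_contra hcon
  have hit : ∀ (c : Fin r) (U : Set Vtx) (u v : Vtx), J (H (2 * (2 * ℓ + 1))) U u v →
      (c, u) ∈ SS r (2 * (2 * ℓ + 1)) (2 * ℓ + 1) → (c, v) ∈ TT r (2 * (2 * ℓ + 1)) (2 * ℓ + 1) →
      ∃ x ∈ X, ∃ y ∈ U, DistLE (K r (2 * (2 * ℓ + 1))) x (c, y) ℓ := by
    intro c U u v hJ hu hv
    by_contra h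
    obtain ⟨w, hw, hs⟩ := pathOf hJ c
    refine hcon ⟨_, _, w, hw, hu, hv, ?_⟩
    rintro x hx ⟨c', y⟩ hy hd
    obtain ⟨h1, h2⟩ := hs _ hy
    simp only at h1 h2
    subst h1
    exact h ⟨x, hx, y, h2, hd⟩
  have key : ∀ c : Fin r, 3 ≤ (X.filter (fun x => x.1 = c)).card := by
    intro c
    have e : 2 ^ (2 * ℓ + 1) = 2 * 2 ^ (2 * ℓ) := by ring
    obtain ⟨xr, mr, yr, hyr, dr⟩ := hit c {ap (2 * (2 * ℓ + 1)) (2 * ℓ + 1) 0} _ _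
      (J.rfl rfl) (Or.inl rfl) (Or.inl rfl)
    obtain ⟨xp, mp, yp, hyp, dp⟩ := hit c UP _ _ (connP _ _) (Or.inr (Or.inl rfl))
      (Or.inr (Or.inl rfl))
    obtain ⟨x0, m0, y0, hy0, d0⟩ := hit c (U0 (2 * ℓ + 1)) _ _
      (conn0 (2 * ℓ + 1) (by omega) (2 ^ (2 * ℓ))) (Or.inr (Or.inl rfl))
      (Or.inr (Or.inl (by simp only [e])))
    obtain ⟨x1, m1, y1, hy1, d1⟩ := hit c (U1 (2 * ℓ + 1)) _ _
      (conn1 (2 * ℓ + 1) (by omega) (2 ^ (2 * ℓ))) (Or.inr (Or.inr rfl))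
      (Or.inr (Or.inr (by simp only [e])))
    rw [Set.mem_singleton_iff] at hyr
    subst hyr
    exact three X c mr mp m0 m1 hyp hy0 hy1 dr dp d0 d1
  have h1 : X.card = ∑ c : Fin r, (X.filter (fun x => x.1 = c)).card :=
    Finset.card_eq_sum_card_fiberwise (fun _ _ => Finset.mem_coe.2 (Finset.mem_univ _))
  have h2 : ∑ _c : Fin r, 3 ≤ ∑ c : Fin r, (X.filter (fun x => x.1 = c)).card :=
    Finset.sum_le_sum fun c _ => key c
  simp at h2
  omega

end CM

/-- Lower bound `n ≥ ⌊3k/2⌋` for the relaxed coarse Menger conjecture: for every `r ≥ 1`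
and `ℓ > 0` there is a graph with no `2r+1` pairwise-3-distant `S`–`T` paths, in which
no `3r-1` balls of radius `ℓ` separate `S` from `T`. -/
theorem stmt_15 (r ℓ : ℕ) (hr : 1 ≤ r) (hl : 0 < ℓ) :
    ∃ (V : Type) (G : SimpleGraph V) (S T : Set V),
      ¬ HasKPaths G S T (2 * r + 1) 3 ∧
      ∀ X : Finset V, X.card ≤ 3 * r - 1 →
        ∃ (u v : V) (w : G.Walk u v), w.IsPath ∧ u ∈ S ∧ v ∈ T ∧
          ∀ x ∈ X, ∀ y ∈ w.support, ¬ DistLE G x y ℓ := by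
  exact ⟨_, CM.K r (2 * (2 * ℓ + 1)), CM.SS r (2 * (2 * ℓ + 1)) (2 * ℓ + 1),
    CM.TT r (2 * (2 * ℓ + 1)) (2 * ℓ + 1), CM.part1 r _ _ (by omega) (by omega),
    CM.part2 r ℓ hr⟩
end
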